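/- arXiv:2102.03743 — 5 statements merged into one kernel-verified Lean document; each statement's English description precedes it below -/
import Mathlib

section
/- Let σ ∈ (0,1) be real and let 1 ≤ k ≤ m be integers. Then the sum over all k-tuples (n_1,…,n_k) of positive integers with n_1+⋯+n_k = m of (1/k!)·(m!/(n_1!⋯n_k!))·∏_{i=1}^{k}(1−σ)_{(n_i−1)} equals σ^{−k}·C(m,k;σ). -/
/-- Rising factorial `(x)_(n) = x (x+1) ⋯ (x+n-1)`, with `(x)_(0) = 1`. -/
def risingFactorial (x : ℝ) : ℕ → ℝ
  | 0 => 1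
  | n + 1 => risingFactorial x n * (x + n)

/-- Generalized factorial coefficient
`C(m,k;σ) = (1/k!) ∑_{i=0}^k (-1)^i binom(k,i) (-iσ)_(m)`. -/
noncomputable def genFactCoeff (m k : ℕ) (σ : ℝ) : ℝ :=
  (1 / (k.factorial : ℝ)) *
    ∑ i ∈ Finset.range (k + 1),
      (-1 : ℝ) ^ i * (k.choose i : ℝ) * risingFactorial (-(i : ℝ) * σ) m

/-
Both sides are multiples of the coefficient of `X ^ m` in `(1 - (1 - X) ^ σ) ^ k`. Since
`(1 - X) ^ x = ∑ (-x)_(n) X ^ n / n!`, the series `1 - (1 - X) ^ σ` has no constant term and has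
`n`-th coefficient `σ (1 - σ)_(n-1) / n!` for `n ≥ 1`, so expanding the `k`-th power as a product
of `k` factors gives the sum over tuples of positive integers. Expanding it by the binomial theorem
and `((1 - X) ^ σ) ^ i = (1 - X) ^ (i σ)` gives `C(m, k; σ)`.
-/

open Finset PowerSeries

section ProductCoefficients

variable {ι R : Type*} [Fintype ι] [DecidableEq ι] [CommSemiring R]

lemma coeff_prod_univ (φ : ι → R⟦X⟧) (m : ℕ) :
    coeff m (∏ i, φ i) = ∑ n ∈ piAntidiag univ m, ∏ i, coeff (n i) (φ i) := by
  rw [coeff_prod]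
  exact sum_equiv Finsupp.equivFunOnFinite (by simp) fun _ _ ↦ rfl

lemma coeff_prod_univ_of_constantCoeff_eq_zero
    [DecidablePred fun n : ι → ℕ ↦ ∀ i, 0 < n i] {φ : ι → R⟦X⟧}
    (hφ : ∀ i, constantCoeff (φ i) = 0) (m : ℕ) :
    coeff m (∏ i, φ i) =
      ∑ n ∈ piAntidiag univ m with ∀ i, 0 < n i, ∏ i, coeff (n i) (φ i) := by
  rw [coeff_prod_univ]
  refine (sum_filter_of_ne fun n _ hn i ↦ Nat.pos_of_ne_zero fun hi ↦ hn ?_).symm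
  exact prod_eq_zero (mem_univ i) (by simpa [hi] using hφ i)

end ProductCoefficients

section OneSubXPow

variable {R : Type*} [CommRing R] [BinomialRing R]

/-- The power series `(1 - X) ^ r` with exponent `r` in a binomial ring, encoded as
`(1 + X) ^ r` with `-X` substituted for `X`; its coefficients are the `(-r)_(n) / n!`. -/
noncomputable def oneSubXPow (r : R) : R⟦X⟧ :=
  rescale (-1) (binomialSeries R r)

lemma coeff_oneSubXPow (r : R) (n : ℕ) :
    coeff n (oneSubXPow r) = Ring.multichoose (-r) n := by
  rw [oneSubXPow, coeff_rescale, binomialSeries_coeff, smul_eq_mul, mul_one, ← neg_neg r,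
    Ring.choose_neg', neg_neg, Units.smul_def, zsmul_eq_mul, Int.cast_negOnePow_natCast,
    ← mul_assoc, ← mul_pow, neg_one_mul, neg_neg, one_pow, one_mul]

lemma oneSubXPow_zero : oneSubXPow (0 : R) = 1 := by
  simp [oneSubXPow]

lemma oneSubXPow_add (r s : R) : oneSubXPow (r + s) = oneSubXPow r * oneSubXPow s := by
  simp [oneSubXPow]

lemma oneSubXPow_natCast_mul (k : ℕ) (r : R) : oneSubXPow (k * r) = oneSubXPow r ^ k := by
  induction k with
  | zero => simp [oneSubXPow_zero]
  | succ k ih => rw [Nat.cast_succ, add_one_mul, oneSubXPow_add, ih, pow_succ]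

lemma constantCoeff_one_sub_oneSubXPow (r : R) : constantCoeff (1 - oneSubXPow r) = 0 := by
  rw [← coeff_zero_eq_constantCoeff_apply, map_sub, coeff_zero_one, coeff_oneSubXPow,
    Ring.multichoose_zero_right, sub_self]

lemma coeff_one_sub_oneSubXPow_pow (r : R) (k m : ℕ) :
    coeff m ((1 - oneSubXPow r) ^ k) =
      ∑ i ∈ range (k + 1), (-1) ^ i * (k.choose i : R) * Ring.multichoose (-(i * r)) m := by
  have expansion : (1 - oneSubXPow r) ^ k =
      ∑ i ∈ range (k + 1), C ((-1) ^ i * (k.choose i : R)) * oneSubXPow (i * r) := by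
    rw [sub_eq_neg_add, add_pow]
    refine sum_congr rfl fun i _ ↦ ?_
    rw [neg_pow, one_pow, oneSubXPow_natCast_mul, map_mul, map_pow, map_neg, map_one, map_natCast]
    ring
  simp only [expansion, map_sum, coeff_C_mul, coeff_oneSubXPow]

end OneSubXPow

lemma risingFactorial_eq_ascPochhammer_eval (x : ℝ) (n : ℕ) :
    risingFactorial x n = (ascPochhammer ℝ n).eval x := by
  induction n with
  | zero => simp [risingFactorial]
  | succ n ih => rw [risingFactorial, ih, ascPochhammer_succ_eval]

lemma risingFactorial_succ_left (x : ℝ) (n : ℕ) :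
    risingFactorial x (n + 1) = x * risingFactorial (x + 1) n := by
  simp [risingFactorial_eq_ascPochhammer_eval, ascPochhammer_succ_left]

lemma factorial_mul_multichoose (x : ℝ) (n : ℕ) :
    (n.factorial : ℝ) * Ring.multichoose x n = risingFactorial x n := by
  rw [← nsmul_eq_mul, Ring.factorial_nsmul_multichoose_eq_ascPochhammer,
    Polynomial.ascPochhammer_smeval_eq_eval, risingFactorial_eq_ascPochhammer_eval]

lemma coeff_one_sub_oneSubXPow_of_pos (σ : ℝ) {n : ℕ} (hn : 0 < n) :
    coeff n (1 - oneSubXPow σ) = σ * risingFactorial (1 - σ) (n - 1) / n.factorial := by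
  obtain ⟨n, rfl⟩ := Nat.exists_eq_add_one.2 hn
  rw [eq_div_iff (by positivity), map_sub, coeff_one, if_neg n.succ_ne_zero, zero_sub,
    coeff_oneSubXPow, neg_mul, mul_comm, factorial_mul_multichoose, risingFactorial_succ_left,
    neg_mul, neg_neg, neg_add_eq_sub, Nat.add_sub_cancel]

lemma genFactCoeff_eq_coeff (m k : ℕ) (σ : ℝ) :
    genFactCoeff m k σ =
      (m.factorial : ℝ) / k.factorial * coeff m ((1 - oneSubXPow σ) ^ k) := by
  simp only [genFactCoeff, coeff_one_sub_oneSubXPow_pow, ← factorial_mul_multichoose, mul_sum,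
    neg_mul]
  exact sum_congr rfl fun i _ ↦ by ring

lemma coeff_one_sub_oneSubXPow_pow_eq_sum_tuples (σ : ℝ) (m k : ℕ) :
    coeff m ((1 - oneSubXPow σ) ^ k) =
      σ ^ k * ∑ n ∈ Nat.antidiagonalTuple k m with ∀ i, 0 < n i,
        (∏ i, risingFactorial (1 - σ) (n i - 1)) / ∏ i, ((n i).factorial : ℝ) := by
  rw [← Fin.prod_const, coeff_prod_univ_of_constantCoeff_eq_zero
    fun _ ↦ constantCoeff_one_sub_oneSubXPow σ, piAntidiag_univ_fin_eq_antidiagonalTuple, mul_sum]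
  refine sum_congr rfl fun n hn ↦ ?_
  have hn_pos : ∀ i, 0 < n i := (mem_filter.1 hn).2
  simp only [coeff_one_sub_oneSubXPow_of_pos σ (hn_pos _), prod_div_distrib, prod_mul_distrib,
    Fin.prod_const, mul_div_assoc]

theorem stmt0_general (σ : ℝ) (hσ : σ ≠ 0) (m k : ℕ) :
    ∑ n ∈ (Finset.Nat.antidiagonalTuple k m).filter (fun n => ∀ i, 0 < n i),
      (1 / (k.factorial : ℝ)) * ((m.factorial : ℝ) / ∏ i, ((n i).factorial : ℝ)) *
        ∏ i, risingFactorial (1 - σ) (n i - 1)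
      = σ ^ (-(k : ℤ)) * genFactCoeff m k σ := by
  rw [genFactCoeff_eq_coeff, coeff_one_sub_oneSubXPow_pow_eq_sum_tuples, mul_left_comm (_ / _),
    zpow_neg, zpow_natCast, inv_mul_cancel_left₀ (pow_ne_zero k hσ), mul_sum]
  exact sum_congr rfl fun n _ ↦ by ring

theorem stmt0 (σ : ℝ) (hσ : σ ∈ Set.Ioo (0 : ℝ) 1) (m k : ℕ) (hk : 1 ≤ k) (hkm : k ≤ m) :
    ∑ n ∈ (Finset.Nat.antidiagonalTuple k m).filter (fun n => ∀ i, 0 < n i),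
      (1 / (k.factorial : ℝ)) * ((m.factorial : ℝ) / ∏ i, ((n i).factorial : ℝ)) *
        ∏ i, risingFactorial (1 - σ) (n i - 1)
      = σ ^ (-(k : ℤ)) * genFactCoeff m k σ :=
  stmt0_general σ hσ.1.ne' m k
end

section
/- Let σ ∈ (0,1) be real and let 1 ≤ ℓ ≤ m and 1 ≤ k ≤ m be integers. Then the sum over all k-tuples (n_1,…,n_k) of positive integers with n_1+⋯+n_k = m of (1/k!)·(m!/(n_1!⋯n_k!))·∏_{i=1}^{k}(1−σ)_{(n_i−1)}·#{j ∈ {1,…,k} : n_j = ℓ} equals binom(m,ℓ)·(1−σ)_{(ℓ−1)}·σ^{−(k−1)}·C(m−ℓ, k−1; σ). -/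
/-!
Writing `m! / ∏ nᵢ!` as `m!` times a product of weights, the sum over compositions becomes a
coefficient extraction from powers of the block series `W = ∑_{n ≥ 1} (1 - σ)_(n-1) Xⁿ / n!`.
By symmetry the count of blocks of size `ℓ` contributes `k` times the sum in which one marked block
has size `ℓ`, which leaves the coefficient of `X^(m-ℓ)` in `W^(k-1)`. Since
`∑ (a)_(n) Xⁿ / n! = (1 - X)^(-a)`, we have `σ W = 1 - (1 - X)^σ`, and the binomial theorem turns
the coefficients of `(1 - (1 - X)^σ)^(k-1)` into generalized factorial coefficients.
-/

section MarkedTuples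

open Finset hiding mk
open PowerSeries

variable {R : Type*} [CommSemiring R]

lemma coeff_prod_eq_sum_antidiagonalTuple (k m : ℕ) (F : Fin k → R⟦X⟧) :
    coeff m (∏ i, F i) = ∑ n ∈ Nat.antidiagonalTuple k m, ∏ i, coeff (n i) (F i) := by
  rw [coeff_prod]
  exact sum_equiv Finsupp.equivFunOnFinite (by simp [Nat.mem_antidiagonalTuple]) fun _ _ ↦ rfl

lemma sum_antidiagonalTuple_ite_eq_prod (w : ℕ → R) (k m ℓ : ℕ) (j : Fin (k + 1)) :
    ∑ n ∈ Nat.antidiagonalTuple (k + 1) m, (if n j = ℓ then ∏ i, w (n i) else 0) =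
      w ℓ * coeff m (X ^ ℓ * mk w ^ k) := by
  let F : Fin (k + 1) → R⟦X⟧ := Function.update (fun _ ↦ mk w) j (C (w ℓ) * X ^ ℓ)
  have F_self : F j = C (w ℓ) * X ^ ℓ := Function.update_self ..
  have F_of_ne {i : Fin (k + 1)} (hi : i ≠ j) : F i = mk w := Function.update_of_ne hi ..
  have prod_F : ∏ i, F i = C (w ℓ) * (X ^ ℓ * mk w ^ k) := by
    rw [prod_update_of_mem (mem_univ j), prod_const, card_sdiff_of_subset (subset_univ _), card_fin,
      card_singleton, Nat.add_sub_cancel, mul_assoc]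
  have prod_coeff_F (n : Fin (k + 1) → ℕ) :
      ∏ i, coeff (n i) (F i) = if n j = ℓ then ∏ i, w (n i) else 0 := by
    have prod_coeff_F_erase : ∏ i ∈ univ.erase j, coeff (n i) (F i) = ∏ i ∈ univ.erase j, w (n i) :=
      prod_congr rfl fun i hi ↦ by rw [F_of_ne (ne_of_mem_erase hi), coeff_mk]
    rw [← mul_prod_erase _ _ (mem_univ j), prod_coeff_F_erase, F_self, coeff_C_mul, coeff_X_pow,
      ← mul_prod_erase _ (fun i ↦ w (n i)) (mem_univ j)]
    split_ifs with hj <;> simp [hj]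
  rw [← coeff_C_mul, ← prod_F, coeff_prod_eq_sum_antidiagonalTuple]
  exact sum_congr rfl fun n _ ↦ (prod_coeff_F n).symm

lemma sum_antidiagonalTuple_prod_mul_card (w : ℕ → R) (k m ℓ : ℕ) :
    ∑ n ∈ Nat.antidiagonalTuple (k + 1) m, (∏ i, w (n i)) * (#{j | n j = ℓ} : R) =
      (k + 1) * (w ℓ * coeff m (X ^ ℓ * mk w ^ k)) := by
  calc
    _ = ∑ n ∈ Nat.antidiagonalTuple (k + 1) m, ∑ j, if n j = ℓ then ∏ i, w (n i) else 0 := by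
      refine sum_congr rfl fun n _ ↦ ?_
      rw [← sum_boole, mul_sum]
      simp only [mul_ite, mul_one, mul_zero]
    _ = ∑ _j : Fin (k + 1), w ℓ * coeff m (X ^ ℓ * mk w ^ k) := by
      rw [sum_comm]
      exact sum_congr rfl fun j _ ↦ sum_antidiagonalTuple_ite_eq_prod w k m ℓ j
    _ = (k + 1) * (w ℓ * coeff m (X ^ ℓ * mk w ^ k)) := by simp

end MarkedTuples

section RisingFactorialSeries

open PowerSeries

lemma risingFactorial_eq_eval_ascPochhammer (a : ℝ) (n : ℕ) :
    risingFactorial a n = (ascPochhammer ℝ n).eval a := by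
  induction n with
  | zero => simp [risingFactorial]
  | succ n ih => rw [risingFactorial, ih, ascPochhammer_succ_eval]

lemma risingFactorial_div_factorial (a : ℝ) (n : ℕ) :
    risingFactorial a n / n.factorial = Ring.multichoose a n := by
  rw [div_eq_iff (by positivity), risingFactorial_eq_eval_ascPochhammer,
    ← Polynomial.ascPochhammer_smeval_eq_eval, ← Ring.factorial_nsmul_multichoose_eq_ascPochhammer,
    nsmul_eq_mul, mul_comm]

lemma risingFactorial_succ (a : ℝ) (n : ℕ) :
    risingFactorial a (n + 1) = a * risingFactorial (a + 1) n := by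
  simp [risingFactorial_eq_eval_ascPochhammer, ascPochhammer_succ_left]

/-- The exponential generating series `∑ (a)_(n) Xⁿ / n!` of the rising factorials of `a`, which
represents `(1 - X)^(-a)`. -/
noncomputable def risingFactorialSeries (a : ℝ) : ℝ⟦X⟧ :=
  mk fun n ↦ risingFactorial a n / n.factorial

lemma risingFactorialSeries_eq_rescale_binomialSeries (a : ℝ) :
    risingFactorialSeries a = rescale (-1) (binomialSeries ℝ (-a)) := by
  ext n
  rw [risingFactorialSeries, coeff_mk, risingFactorial_div_factorial, coeff_rescale,
    binomialSeries_coeff, Ring.choose_neg', Units.smul_def, Int.coe_negOnePow_natCast]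
  simp [← mul_assoc, ← mul_pow]

lemma risingFactorialSeries_add (a b : ℝ) :
    risingFactorialSeries (a + b) = risingFactorialSeries a * risingFactorialSeries b := by
  simp only [risingFactorialSeries_eq_rescale_binomialSeries, neg_add, binomialSeries_add, map_mul]

lemma risingFactorialSeries_pow (a : ℝ) (i : ℕ) :
    risingFactorialSeries a ^ i = risingFactorialSeries (i * a) := by
  induction i with
  | zero => simp [risingFactorialSeries_eq_rescale_binomialSeries]
  | succ i ih => rw [pow_succ, ih, ← risingFactorialSeries_add, Nat.cast_succ, add_one_mul]

lemma genFactCoeff_eq_coeff_one_sub_pow (m k : ℕ) (σ : ℝ) :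
    genFactCoeff m k σ =
      m.factorial / k.factorial * coeff m ((1 - risingFactorialSeries (-σ)) ^ k) := by
  have binomial_expansion : (1 - risingFactorialSeries (-σ)) ^ k =
      ∑ i ∈ Finset.range (k + 1),
        C ((-1) ^ i * (k.choose i : ℝ)) * risingFactorialSeries (-(i : ℝ) * σ) := by
    rw [sub_eq_neg_add, add_pow]
    refine Finset.sum_congr rfl fun i _ ↦ ?_
    rw [neg_pow, risingFactorialSeries_pow, one_pow, mul_one, mul_right_comm, neg_mul_comm]
    simp only [map_mul, map_pow, map_neg, map_one, map_natCast]
  have coeff_term (i : ℕ) :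
      m.factorial * coeff m
          (C ((-1) ^ i * (k.choose i : ℝ)) * risingFactorialSeries (-(i : ℝ) * σ)) =
        (-1) ^ i * (k.choose i : ℝ) * risingFactorial (-(i : ℝ) * σ) m := by
    rw [coeff_C_mul, risingFactorialSeries, coeff_mk]
    field_simp
  rw [genFactCoeff, Finset.sum_congr rfl fun i _ ↦ (coeff_term i).symm, ← Finset.mul_sum,
    ← map_sum, ← binomial_expansion]
  ring

end RisingFactorialSeries

section BlockWeights

open Finset hiding mk
open PowerSeries

/-- The weight `(1 - σ)_(n-1) / n!` of a block of size `n`. An empty block has weight `0`, so that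
sums over tuples of positive integers may be taken over all tuples of natural numbers. -/
noncomputable def blockWeight (σ : ℝ) : ℕ → ℝ
  | 0 => 0
  | n + 1 => risingFactorial (1 - σ) n / (n + 1).factorial

lemma blockWeight_of_pos (σ : ℝ) {n : ℕ} (hn : 0 < n) :
    blockWeight σ n = risingFactorial (1 - σ) (n - 1) / n.factorial := by
  obtain ⟨n, rfl⟩ := Nat.exists_eq_succ_of_ne_zero hn.ne'
  rfl

lemma smul_mk_blockWeight (σ : ℝ) : σ • mk (blockWeight σ) = 1 - risingFactorialSeries (-σ) := by
  ext n
  cases n with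
  | zero => simp [blockWeight, risingFactorialSeries, risingFactorial]
  | succ n =>
    rw [coeff_smul, coeff_mk, blockWeight, map_sub, coeff_one, if_neg n.succ_ne_zero,
      risingFactorialSeries, coeff_mk, risingFactorial_succ, neg_add_eq_sub, smul_eq_mul]
    ring

lemma genFactCoeff_eq_coeff_blockWeight_pow (m k : ℕ) (σ : ℝ) :
    genFactCoeff m k σ =
      m.factorial / k.factorial * (σ ^ k * coeff m (mk (blockWeight σ) ^ k)) := by
  rw [genFactCoeff_eq_coeff_one_sub_pow, ← smul_mk_blockWeight, smul_pow, coeff_smul, smul_eq_mul]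

lemma sum_filter_pos_eq_sum_blockWeight (σ : ℝ) (k m : ℕ) (g : (Fin k → ℕ) → ℝ) :
    ∑ n ∈ Nat.antidiagonalTuple k m with ∀ i, 0 < n i,
      (1 / (k.factorial : ℝ)) * ((m.factorial : ℝ) / ∏ i, ((n i).factorial : ℝ)) *
        (∏ i, risingFactorial (1 - σ) (n i - 1)) * g n =
      m.factorial / k.factorial *
        ∑ n ∈ Nat.antidiagonalTuple k m, (∏ i, blockWeight σ (n i)) * g n := by
  have pos_of_summand_ne_zero (n : Fin k → ℕ) (hn : (∏ i, blockWeight σ (n i)) * g n ≠ 0)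
      (i : Fin k) : 0 < n i := by
    have weight_ne_zero : blockWeight σ (n i) ≠ 0 :=
      prod_ne_zero_iff.mp (left_ne_zero_of_mul hn) i (mem_univ i)
    exact Nat.pos_of_ne_zero fun hi ↦ weight_ne_zero (by rw [hi, blockWeight])
  rw [← sum_filter_of_ne fun n _ ↦ pos_of_summand_ne_zero n, mul_sum]
  refine sum_congr rfl fun n hn ↦ ?_
  rw [prod_congr rfl fun i _ ↦ blockWeight_of_pos σ ((mem_filter.mp hn).2 i), prod_div_distrib]
  ring

end BlockWeights

theorem stmt1_general (σ : ℝ) (hσ : σ ≠ 0) (m k ℓ : ℕ)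
    (hℓ : 1 ≤ ℓ) (hℓm : ℓ ≤ m) (hk : 1 ≤ k) :
    ∑ n ∈ (Finset.Nat.antidiagonalTuple k m).filter (fun n => ∀ i, 0 < n i),
      (1 / (k.factorial : ℝ)) * ((m.factorial : ℝ) / ∏ i, ((n i).factorial : ℝ)) *
        (∏ i, risingFactorial (1 - σ) (n i - 1)) *
        ((Finset.univ.filter (fun j => n j = ℓ)).card : ℝ)
      = (m.choose ℓ : ℝ) * risingFactorial (1 - σ) (ℓ - 1) *
          σ ^ (-((k : ℤ) - 1)) * genFactCoeff (m - ℓ) (k - 1) σ := by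
  obtain ⟨k, rfl⟩ := Nat.exists_eq_add_of_le' hk
  have zpow_eq : σ ^ (-(((k + 1 : ℕ) : ℤ) - 1)) = (σ ^ k)⁻¹ := by
    rw [Nat.cast_succ, add_sub_cancel_right, zpow_neg, zpow_natCast]
  rw [sum_filter_pos_eq_sum_blockWeight, sum_antidiagonalTuple_prod_mul_card,
    PowerSeries.coeff_X_pow_mul', if_pos hℓm, blockWeight_of_pos σ hℓ, zpow_eq, Nat.add_sub_cancel,
    genFactCoeff_eq_coeff_blockWeight_pow, Nat.cast_choose ℝ hℓm, Nat.factorial_succ, Nat.cast_mul,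
    Nat.cast_succ]
  field_simp

theorem stmt1 (σ : ℝ) (hσ : σ ∈ Set.Ioo (0 : ℝ) 1) (m k ℓ : ℕ)
    (hℓ : 1 ≤ ℓ) (hℓm : ℓ ≤ m) (hk : 1 ≤ k) (hkm : k ≤ m) :
    ∑ n ∈ (Finset.Nat.antidiagonalTuple k m).filter (fun n => ∀ i, 0 < n i),
      (1 / (k.factorial : ℝ)) * ((m.factorial : ℝ) / ∏ i, ((n i).factorial : ℝ)) *
        (∏ i, risingFactorial (1 - σ) (n i - 1)) *
        ((Finset.univ.filter (fun j => n j = ℓ)).card : ℝ)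
      = (m.choose ℓ : ℝ) * risingFactorial (1 - σ) (ℓ - 1) *
          σ ^ (-((k : ℤ) - 1)) * genFactCoeff (m - ℓ) (k - 1) σ :=
  stmt1_general σ hσ.1.ne' m k ℓ hℓ hℓm hk
end

section
/- Let α > 0 and let 1 ≤ k ≤ m be integers. Then lim_{σ→0⁺} ((α·2^{σ−1})^k / Γ(m)) · ∫_0^∞ x^{m−1}·(1/2 + x)^{−(m − kσ)}·exp( −(α·2^{σ−1}/σ)·[ (1/2 + x)^σ − 2^{−σ} ] ) dx = (α/2)^k / (α/2)_{(m)}, where (α/2)_{(m)} is the rising factorial. -/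
open MeasureTheory Real

/-!
Substituting `x ↦ x / β` shows that the weight depends on the mass `α` and the rate `1 / β` (here
`β = 2`) only through `a = α / β`. What is left is the limit of
`∫ x ^ (m - 1) * (1 + x) ^ (kσ - m) * exp (-a * ((1 + x) ^ σ - 1) / σ)`. Since
`(u ^ σ - 1) / σ` decreases to `log u` as `σ → 0⁺`, the exponential increases to `(1 + x) ^ (-a)`.
As soon as `kσ ≤ a / 2`, the integrand is at most `x ^ (m - 1) * (1 + x) ^ (-(m + a / 2))`, so
dominated convergence yields the beta integral
`∫ x ^ (m - 1) * (1 + x) ^ (-(m + a)) = Γ(m) Γ(a) / Γ(m + a)`.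
-/

section

open Filter ProbabilityTheory Set Topology

theorem risingFactorial_eq_Gamma_div {x : ℝ} (hx : ∀ k : ℕ, x ≠ -k) (n : ℕ) :
    risingFactorial x n = Gamma (x + n) / Gamma x := by
  rw [eq_div_iff (Gamma_ne_zero hx)]
  induction n with
  | zero => simp [risingFactorial]
  | succ n ih =>
    have hxn : x + n ≠ 0 := fun h => hx n (eq_neg_of_add_eq_zero_left h)
    rw [risingFactorial, Nat.cast_succ, ← add_assoc, Gamma_add_one hxn, ← ih]
    ring

theorem integral_Ioo_rpow_mul_one_sub_rpow {s a : ℝ} (hs : 0 < s) (ha : 0 < a) :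
    ∫ x in Ioo (0 : ℝ) 1, x ^ (s - 1) * (1 - x) ^ (a - 1) = beta s a := by
  have hofReal : Complex.betaIntegral s a =
      ((∫ x in (0 : ℝ)..1, x ^ (s - 1) * (1 - x) ^ (a - 1) : ℝ) : ℂ) := by
    rw [Complex.betaIntegral, ← intervalIntegral.integral_ofReal]
    refine intervalIntegral.integral_congr fun x hx => ?_
    rw [uIcc_of_le zero_le_one] at hx
    push_cast [Complex.ofReal_cpow hx.1, Complex.ofReal_cpow (sub_nonneg.2 hx.2)]
    rfl
  rw [beta_eq_betaIntegralReal s a hs ha, hofReal, Complex.ofReal_re,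
    intervalIntegral.integral_of_le zero_le_one, integral_Ioc_eq_integral_Ioo]

theorem hasDerivAt_div_one_add {x : ℝ} (hx : 1 + x ≠ 0) :
    HasDerivAt (fun y : ℝ => y / (1 + y)) ((1 + x) ^ 2)⁻¹ x := by
  refine ((hasDerivAt_id x).div ((hasDerivAt_id x).const_add 1) hx).congr_deriv ?_
  simp only [id_eq]
  ring

theorem injOn_div_one_add : InjOn (fun x : ℝ => x / (1 + x)) (Ioi 0) := by
  intro x hx y hy hxy
  rw [mem_Ioi] at hx hy
  have := (div_eq_div_iff (by positivity) (by positivity)).1 hxy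
  linarith

theorem image_div_one_add_Ioi : (fun x : ℝ => x / (1 + x)) '' Ioi 0 = Ioo 0 1 := by
  ext t
  constructor
  · rintro ⟨x, hx : 0 < x, rfl⟩
    exact ⟨by positivity, (div_lt_one (by positivity)).2 (by linarith)⟩
  · rintro ⟨ht₀, ht₁⟩
    have h : 0 < 1 - t := sub_pos.2 ht₁
    refine ⟨t / (1 - t), div_pos ht₀ h, ?_⟩
    field_simp
    ring

theorem integral_Ioi_rpow_mul_one_add_rpow {s a : ℝ} (hs : 0 < s) (ha : 0 < a) :
    ∫ x in Ioi (0 : ℝ), x ^ (s - 1) * (1 + x) ^ (-(s + a)) = beta s a := by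
  rw [← integral_Ioo_rpow_mul_one_sub_rpow hs ha, ← image_div_one_add_Ioi,
    integral_image_eq_integral_abs_deriv_smul measurableSet_Ioi
      (fun x (hx : 0 < x) => (hasDerivAt_div_one_add (by positivity)).hasDerivWithinAt)
      injOn_div_one_add]
  refine setIntegral_congr_fun measurableSet_Ioi fun x (hx : 0 < x) => ?_
  have hu : 0 < 1 + x := by positivity
  have hsub : 1 - x / (1 + x) = (1 + x)⁻¹ := by field_simp; ring
  have hexp : -(s + a) = -(s - 1) + -(a - 1) - (2 : ℕ) := by push_cast; ring
  simp only [smul_eq_mul]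
  rw [hsub, div_rpow hx.le hu.le, div_eq_mul_inv, inv_rpow hu.le, ← rpow_neg hu.le,
    ← rpow_neg hu.le, abs_of_pos (by positivity), hexp, rpow_sub_natCast hu.ne', rpow_add hu]
  ring

theorem integrableOn_Ioi_rpow_mul_one_add_rpow {s a : ℝ} (hs : 0 < s) (ha : 0 < a) :
    IntegrableOn (fun x : ℝ => x ^ (s - 1) * (1 + x) ^ (-(s + a))) (Ioi 0) :=
  .of_integral_ne_zero ((integral_Ioi_rpow_mul_one_add_rpow hs ha).trans_ne (beta_pos hs ha).ne')

theorem exp_neg_mul_rpow_sub_one_le {a u σ : ℝ} (ha : 0 ≤ a) (hu : 0 < u) (hσ : 0 < σ) :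
    exp (-a * (σ⁻¹ * (u ^ σ - 1))) ≤ u ^ (-a) := by
  have hlog : log u ≤ σ⁻¹ * (u ^ σ - 1) := by
    rw [le_inv_mul_iff₀ hσ, ← log_rpow hu]
    exact log_le_sub_one_of_pos (rpow_pos_of_pos hu σ)
  rw [rpow_def_of_pos hu (-a), exp_le_exp]
  linarith [mul_le_mul_of_nonneg_left hlog ha]

theorem tendsto_exp_neg_mul_rpow_sub_one {u : ℝ} (hu : 0 < u) (a : ℝ) :
    Tendsto (fun σ : ℝ => exp (-a * (σ⁻¹ * (u ^ σ - 1)))) (𝓝[>] 0) (𝓝 (u ^ (-a))) := by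
  rw [rpow_def_of_pos hu, mul_comm]
  exact ((tendsto_rpow_sub_one_log hu).const_mul (-a)).rexp

/-- The integrand of the weight `nggpWeight`. -/
noncomputable def nggpIntegrand (a s r σ x : ℝ) : ℝ :=
  x ^ (s - 1) * (1 + x) ^ (r * σ - s) * exp (-a * (σ⁻¹ * ((1 + x) ^ σ - 1)))

/-- The weight `V_{s,r}` in the exchangeable partition probability function of the normalized
generalized gamma process with mass `a`, unit rate and stability parameter `σ`. The sample size `s`
and the number of blocks `r` are allowed to be real. -/
noncomputable def nggpWeight (a s r σ : ℝ) : ℝ :=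
  a ^ r / Gamma s * ∫ x in Ioi (0 : ℝ), nggpIntegrand a s r σ x

theorem integrand_comp_inv_mul_eq_nggpIntegrand {β x : ℝ} (hβ : 0 < β) (hx : 0 ≤ x)
    (α s r σ : ℝ) :
    (β⁻¹ * x) ^ (s - 1) * (1 / β + β⁻¹ * x) ^ (-(s - r * σ)) *
        exp (-(α * β ^ (σ - 1) / σ) * ((1 / β + β⁻¹ * x) ^ σ - β ^ (-σ))) =
      β ^ (1 - r * σ) * nggpIntegrand (α / β) s r σ x := by
  have hfactor : 1 / β + β⁻¹ * x = β⁻¹ * (1 + x) := by ring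
  have hscale (q : ℝ) : (β⁻¹ * (1 + x)) ^ q = β ^ (-q) * (1 + x) ^ q := by
    rw [mul_rpow (by positivity) (by positivity), inv_rpow hβ.le, rpow_neg hβ.le]
  have hpow : β ^ (1 - r * σ) = β ^ (-(s - 1)) * β ^ (-(r * σ - s)) := by
    rw [← rpow_add hβ]
    ring_nf
  have hexponent : -(α * β ^ (σ - 1) / σ) * (β ^ (-σ) * (1 + x) ^ σ - β ^ (-σ)) =
      -(α / β) * (σ⁻¹ * ((1 + x) ^ σ - 1)) := by
    rw [rpow_sub_one hβ.ne', rpow_neg hβ.le]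
    field_simp
  rw [nggpIntegrand, hfactor, hscale, hscale, hexponent, hpow, mul_rpow (by positivity) hx,
    inv_rpow hβ.le, ← rpow_neg hβ.le, neg_sub s (r * σ)]
  ring

theorem rpow_div_Gamma_mul_integral_eq_nggpWeight {α β : ℝ} (hα : 0 ≤ α) (hβ : 0 < β)
    (s r σ : ℝ) :
    (α * β ^ (σ - 1)) ^ r / Gamma s *
      (∫ x in Ioi (0 : ℝ), x ^ (s - 1) * (1 / β + x) ^ (-(s - r * σ)) *
        exp (-(α * β ^ (σ - 1) / σ) * ((1 / β + x) ^ σ - β ^ (-σ)))) =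
      nggpWeight (α / β) s r σ := by
  have hmass : (α * β ^ (σ - 1)) ^ r * β⁻¹ * β ^ (1 - r * σ) = (α / β) ^ r := by
    rw [rpow_sub_one hβ.ne', ← mul_div_assoc, mul_div_right_comm,
      mul_rpow (by positivity) (by positivity), ← rpow_mul hβ.le, rpow_sub hβ, rpow_one,
      mul_comm σ r]
    field_simp
  conv_lhs => rw [← mul_zero β⁻¹, ← integral_comp_mul_left_Ioi' _ 0 (inv_pos.2 hβ)]
  rw [setIntegral_congr_fun measurableSet_Ioi fun x (hx : 0 < x) =>
    integrand_comp_inv_mul_eq_nggpIntegrand hβ hx.le α s r σ, integral_const_mul, smul_eq_mul,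
    nggpWeight, ← hmass]
  ring

theorem norm_nggpIntegrand_le {a b s r σ x : ℝ} (ha : 0 ≤ a) (hσ : 0 < σ) (hx : 0 ≤ x)
    (hb : r * σ + b ≤ a) :
    ‖nggpIntegrand a s r σ x‖ ≤ x ^ (s - 1) * (1 + x) ^ (-(s + b)) := by
  have hu : 0 < 1 + x := by positivity
  rw [nggpIntegrand, norm_of_nonneg (by positivity), mul_assoc]
  gcongr
  calc (1 + x) ^ (r * σ - s) * exp (-a * (σ⁻¹ * ((1 + x) ^ σ - 1)))
      ≤ (1 + x) ^ (r * σ - s) * (1 + x) ^ (-a) := by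
        gcongr
        exact exp_neg_mul_rpow_sub_one_le ha hu hσ
    _ = (1 + x) ^ (r * σ - s + -a) := (rpow_add hu _ _).symm
    _ ≤ (1 + x) ^ (-(s + b)) := rpow_le_rpow_of_exponent_le (by linarith) (by linarith)

theorem tendsto_nggpIntegrand {x : ℝ} (hx : -1 < x) (a s r : ℝ) :
    Tendsto (fun σ : ℝ => nggpIntegrand a s r σ x) (𝓝[>] 0)
      (𝓝 (x ^ (s - 1) * (1 + x) ^ (-(s + a)))) := by
  have hu : 0 < 1 + x := neg_lt_iff_pos_add'.1 hx
  have hpow : Tendsto (fun σ : ℝ => (1 + x) ^ (r * σ - s)) (𝓝[>] 0) (𝓝 ((1 + x) ^ (r * 0 - s))) :=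
    ((continuous_const_rpow hu.ne').comp (by fun_prop)).continuousWithinAt.tendsto
  have hexp : -(s + a) = (r * 0 - s) + -a := by ring
  rw [hexp, rpow_add hu, ← mul_assoc]
  exact (hpow.const_mul _).mul (tendsto_exp_neg_mul_rpow_sub_one hu a)

theorem tendsto_integral_nggpIntegrand {a s : ℝ} (ha : 0 < a) (hs : 0 < s) (r : ℝ) :
    Tendsto (fun σ : ℝ => ∫ x in Ioi (0 : ℝ), nggpIntegrand a s r σ x) (𝓝[>] 0)
      (𝓝 (beta s a)) := by
  have hsmall : ∀ᶠ σ in 𝓝[>] (0 : ℝ), r * σ < a / 2 := by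
    have hcont : Tendsto (fun σ : ℝ => r * σ) (𝓝[>] 0) (𝓝 (r * 0)) :=
      (continuous_const_mul r).continuousWithinAt
    exact hcont.eventually_lt_const (by simpa using ha)
  rw [← integral_Ioi_rpow_mul_one_add_rpow hs ha]
  refine tendsto_integral_filter_of_dominated_convergence _ ?_ ?_
    (integrableOn_Ioi_rpow_mul_one_add_rpow hs (half_pos ha)) ?_
  · exact .of_forall fun σ => Measurable.aestronglyMeasurable (by unfold nggpIntegrand; fun_prop)
  · filter_upwards [hsmall, self_mem_nhdsWithin] with σ hrσ hσ
    filter_upwards [ae_restrict_mem measurableSet_Ioi] with x hx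
    exact norm_nggpIntegrand_le ha.le hσ (le_of_lt hx) (by linarith)
  · filter_upwards [ae_restrict_mem measurableSet_Ioi] with x hx
    exact tendsto_nggpIntegrand (neg_one_lt_zero.trans hx) a s r

theorem tendsto_nggpWeight {a s : ℝ} (ha : 0 < a) (hs : 0 < s) (r : ℝ) :
    Tendsto (nggpWeight a s r) (𝓝[>] 0) (𝓝 (a ^ r / (Gamma (a + s) / Gamma a))) := by
  have hvalue : a ^ r / (Gamma (a + s) / Gamma a) = a ^ r / Gamma s * beta s a := by
    have hΓs := (Gamma_pos_of_pos hs).ne'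
    rw [beta, add_comm s a]
    field_simp
  rw [hvalue]
  exact (tendsto_integral_nggpIntegrand ha hs r).const_mul _

theorem stmt3_general {α β s : ℝ} (hα : 0 < α) (hβ : 0 < β) (hs : 0 < s) (r : ℝ) :
    Tendsto
      (fun σ : ℝ =>
        (α * β ^ (σ - 1)) ^ r / Gamma s *
          ∫ x in Ioi (0 : ℝ),
            x ^ (s - 1) * (1 / β + x) ^ (-(s - r * σ)) *
              exp (-(α * β ^ (σ - 1) / σ) * ((1 / β + x) ^ σ - β ^ (-σ))))
      (𝓝[>] 0) (𝓝 ((α / β) ^ r / (Gamma (α / β + s) / Gamma (α / β)))) := by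
  simpa only [rpow_div_Gamma_mul_integral_eq_nggpWeight hα.le hβ] using
    tendsto_nggpWeight (div_pos hα hβ) hs r

end

/-- As `σ → 0⁺`, the NGGP weight `V_{m,k}` converges to the Dirichlet process
(Ewens) weight `(α/2)^k / (α/2)_(m)`. -/
theorem stmt3 (α : ℝ) (hα : 0 < α) (m k : ℕ) (hk : 1 ≤ k) (hkm : k ≤ m) :
    Filter.Tendsto
      (fun σ : ℝ =>
        ((α * (2 : ℝ) ^ (σ - 1)) ^ k / Real.Gamma m) *
          ∫ x in Set.Ioi (0 : ℝ),
            x ^ (m - 1) * ((1 / 2 : ℝ) + x) ^ (-((m : ℝ) - k * σ)) *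
              Real.exp (-(α * (2 : ℝ) ^ (σ - 1) / σ) *
                (((1 / 2 : ℝ) + x) ^ σ - (2 : ℝ) ^ (-σ))))
      (nhdsWithin 0 (Set.Ioi 0))
      (nhds ((α / 2) ^ k / risingFactorial (α / 2) m)) := by
  have hm : 0 < m := hk.trans hkm
  have hpole (n : ℕ) : α / 2 ≠ -n :=
    ((neg_nonpos.2 n.cast_nonneg).trans_lt (half_pos hα)).ne'
  simpa only [rpow_natCast, ← Nat.cast_pred hm, ← risingFactorial_eq_Gamma_div hpole] using
    stmt3_general hα two_pos (Nat.cast_pos.2 hm) k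
end

section
/- For every integer m ≥ 1 and every real θ > 0, Σ_{k=1}^{m} C(m,k;1/2)·θ^k = e^{θ}·θ^{2m}·∫_0^∞ x^m·e^{−x·θ²}·(1/(2√π))·x^{−3/2}·exp(−1/(4x)) dx. -/
open MeasureTheory

/-!
Write `P_m(θ) = ∑ₖ C(m,k;σ) θᵏ`. The recurrence of the coefficients reads
`P_{m+1} = m P_m + σ θ (P_m - P_m')`, which is the recurrence obtained by differentiating
`e^{-s^σ} P_m(s^σ) / s^m` in `s`; hence the `m`-th derivative of `e^{-s^σ}` is
`(-1)^m e^{-s^σ} P_m(s^σ) / s^m`. If `Y` has Laplace transform `e^{-s^σ}`, differentiating under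
the expectation identifies this with `(-1)^m E[Y^m e^{-sY}]`. For `σ = 1/2` the Laplace transform
of the explicit density comes from an antiderivative in terms of the error function: the squares of
`θ√x ± 1/(2√x)` are `θ²x + 1/(4x) ± θ`, and the two resulting Gaussians combine to the integrand.
-/

open Filter Topology ProbabilityTheory Polynomial

lemma risingFactorial_zero_left {m : ℕ} (hm : m ≠ 0) : risingFactorial 0 m = 0 := by
  induction m, Nat.one_le_iff_ne_zero.mpr hm using Nat.le_induction with
  | base => simp [risingFactorial]
  | succ n hn ih => rw [risingFactorial, ih (Nat.one_le_iff_ne_zero.mp hn), zero_mul]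

lemma genFactCoeff_zero_right {m : ℕ} (hm : m ≠ 0) (σ : ℝ) : genFactCoeff m 0 σ = 0 := by
  simp [genFactCoeff, risingFactorial_zero_left hm]

lemma genFactCoeff_zero_zero (σ : ℝ) : genFactCoeff 0 0 σ = 1 := by
  simp [genFactCoeff, risingFactorial]

lemma genFactCoeff_zero_succ (k : ℕ) (σ : ℝ) : genFactCoeff 0 (k + 1) σ = 0 := by
  have h : ∑ i ∈ Finset.range (k + 1 + 1), (-1 : ℝ) ^ i * ((k + 1).choose i : ℝ) = 0 := by
    exact_mod_cast Int.alternating_sum_range_choose_of_ne k.succ_ne_zero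
  simp only [genFactCoeff, risingFactorial, mul_one, h, mul_zero]

lemma sum_alternating_choose_succ_mul_sub {R : Type*} [CommRing R] (k : ℕ) (r : ℕ → R) :
    ∑ i ∈ Finset.range (k + 2), (-1) ^ i * ((k + 1).choose i : R) * ((k + 1 - i) * r i) =
      (k + 1) * ∑ i ∈ Finset.range (k + 1), (-1) ^ i * (k.choose i : R) * r i := by
  have hchoose : ∀ i ≤ k + 1, ((k + 1).choose i : R) * (k + 1 - i) = k.choose i * (k + 1) := by
    intro i hi
    have h := congrArg (Nat.cast : ℕ → R) (Nat.choose_mul_succ_eq k i)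
    push_cast [Nat.cast_sub hi] at h
    exact h.symm
  rw [Finset.sum_range_succ, Finset.mul_sum]
  simp only [Nat.cast_add, Nat.cast_one, sub_self, zero_mul, mul_zero, add_zero]
  refine Finset.sum_congr rfl fun i hi ↦ ?_
  linear_combination (-1) ^ i * r i * hchoose i (Finset.mem_range.mp hi).le

lemma genFactCoeff_succ_succ (m k : ℕ) (σ : ℝ) :
    genFactCoeff (m + 1) (k + 1) σ =
      (m - (k + 1) * σ) * genFactCoeff m (k + 1) σ + σ * genFactCoeff m k σ := by
  have hsplit : ∑ i ∈ Finset.range (k + 2),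
      (-1 : ℝ) ^ i * ((k + 1).choose i : ℝ) * risingFactorial (-(i : ℝ) * σ) (m + 1) =
        (m - (k + 1) * σ) * ∑ i ∈ Finset.range (k + 2),
          (-1 : ℝ) ^ i * ((k + 1).choose i : ℝ) * risingFactorial (-(i : ℝ) * σ) m +
        σ * ∑ i ∈ Finset.range (k + 2), (-1 : ℝ) ^ i * ((k + 1).choose i : ℝ) *
          ((k + 1 - i) * risingFactorial (-(i : ℝ) * σ) m) := by
    rw [Finset.mul_sum, Finset.mul_sum, ← Finset.sum_add_distrib]
    refine Finset.sum_congr rfl fun i _ ↦ ?_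
    rw [risingFactorial]
    ring
  rw [genFactCoeff, hsplit, sum_alternating_choose_succ_mul_sub, genFactCoeff, genFactCoeff,
    Nat.factorial_succ]
  push_cast
  field_simp

lemma genFactCoeff_eq_zero_of_lt {m k : ℕ} (h : m < k) (σ : ℝ) : genFactCoeff m k σ = 0 := by
  induction m generalizing k with
  | zero =>
    obtain ⟨j, rfl⟩ := Nat.exists_eq_succ_of_ne_zero h.ne'
    exact genFactCoeff_zero_succ j σ
  | succ m ih =>
    obtain ⟨j, rfl⟩ := Nat.exists_eq_succ_of_ne_zero (Nat.ne_zero_of_lt h)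
    rw [genFactCoeff_succ_succ, ih (by omega), ih (by omega), mul_zero, mul_zero, add_zero]

/-- The polynomial `∑ₖ C(m,k;σ) Xᵏ` generating the `m`-th row of generalized factorial
coefficients. -/
noncomputable def genFactPoly (m : ℕ) (σ : ℝ) : ℝ[X] :=
  ∑ k ∈ Finset.range (m + 1), C (genFactCoeff m k σ) * X ^ k

lemma coeff_genFactPoly (m k : ℕ) (σ : ℝ) : (genFactPoly m σ).coeff k = genFactCoeff m k σ := by
  simp only [genFactPoly, finsetSum_coeff, coeff_C_mul_X_pow, Finset.sum_ite_eq,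
    Finset.mem_range, ite_eq_left_iff, not_lt]
  exact fun h ↦ (genFactCoeff_eq_zero_of_lt h σ).symm

lemma eval_genFactPoly {m : ℕ} (hm : m ≠ 0) (σ θ : ℝ) :
    (genFactPoly m σ).eval θ = ∑ k ∈ Finset.Icc 1 m, genFactCoeff m k σ * θ ^ k := by
  simp only [genFactPoly, eval_finsetSum, eval_mul, eval_C, eval_pow, eval_X]
  rw [Finset.range_eq_Ico, Finset.sum_eq_sum_Ico_succ_bot m.succ_pos,
    genFactCoeff_zero_right hm, zero_mul, zero_add, zero_add]
  rfl

lemma genFactPoly_zero (σ : ℝ) : genFactPoly 0 σ = 1 := by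
  simp [genFactPoly, genFactCoeff_zero_zero]

lemma genFactPoly_succ (m : ℕ) (σ : ℝ) :
    genFactPoly (m + 1) σ = C (m : ℝ) * genFactPoly m σ +
      C σ * (X * (genFactPoly m σ - derivative (genFactPoly m σ))) := by
  ext k
  cases k with
  | zero =>
    rcases eq_or_ne m 0 with rfl | hm <;>
      simp [mul_sub, coeff_genFactPoly, genFactCoeff_zero_right, *]
  | succ k =>
    simp only [coeff_add, coeff_C_mul, coeff_X_mul, coeff_sub, coeff_derivative,
      coeff_genFactPoly, genFactCoeff_succ_succ]
    ring

section StableMoments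

lemma hasDerivAt_exp_neg_rpow_mul_eval_genFactPoly (m : ℕ) (σ : ℝ) {s : ℝ} (hs : 0 < s) :
    HasDerivAt (fun s ↦ Real.exp (-s ^ σ) * (genFactPoly m σ).eval (s ^ σ) / s ^ m)
      (-(Real.exp (-s ^ σ) * (genFactPoly (m + 1) σ).eval (s ^ σ) / s ^ (m + 1))) s := by
  have hpow : HasDerivAt (fun s : ℝ ↦ s ^ σ) (σ * (s ^ σ / s)) s := by
    simpa only [Real.rpow_sub_one hs.ne'] using Real.hasDerivAt_rpow_const (Or.inl hs.ne')
  have heval := ((genFactPoly m σ).hasDerivAt (s ^ σ)).comp s hpow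
  refine ((hpow.neg.exp.mul heval).div (hasDerivAt_pow m s) (by positivity)).congr_deriv ?_
  simp only [genFactPoly_succ, eval_add, eval_sub, eval_mul, eval_C, eval_X, Function.comp_apply,
    Pi.mul_apply, Pi.neg_apply]
  cases m with
  | zero =>
    simp only [pow_zero, Nat.cast_zero]
    field_simp
    ring
  | succ m =>
    simp only [Nat.add_sub_cancel]
    field_simp
    ring

lemma iteratedDeriv_exp_neg_rpow (m : ℕ) (σ : ℝ) {s : ℝ} (hs : 0 < s) :
    iteratedDeriv m (fun s ↦ Real.exp (-s ^ σ)) s =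
      (-1) ^ m * (Real.exp (-s ^ σ) * (genFactPoly m σ).eval (s ^ σ) / s ^ m) := by
  induction m generalizing s with
  | zero => simp [genFactPoly_zero]
  | succ m ih =>
    have hnear : iteratedDeriv m (fun s ↦ Real.exp (-s ^ σ)) =ᶠ[𝓝 s] fun s ↦
        (-1) ^ m * (Real.exp (-s ^ σ) * (genFactPoly m σ).eval (s ^ σ) / s ^ m) := by
      filter_upwards [Ioi_mem_nhds hs] with y hy using ih hy
    rw [iteratedDeriv_succ, hnear.deriv_eq,
      ((hasDerivAt_exp_neg_rpow_mul_eval_genFactPoly m σ hs).const_mul _).deriv]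
    ring

variable {Ω : Type*} [MeasurableSpace Ω] {μ : Measure Ω} {Y : Ω → ℝ} {σ : ℝ}

lemma Iio_subset_interior_integrableExpSet_of_mgf_eq
    (hY : ∀ s > 0, mgf Y μ (-s) = Real.exp (-s ^ σ)) :
    Set.Iio 0 ⊆ interior (integrableExpSet Y μ) := by
  refine interior_maximal (fun t ht ↦ ?_) isOpen_Iio
  have h := hY (-t) (neg_pos.mpr ht)
  rw [neg_neg] at h
  exact Integrable.of_integral_ne_zero (h.trans_ne (Real.exp_ne_zero _))

theorem integral_pow_mul_exp_neg_mul_of_mgf_eq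
    (hY : ∀ s > 0, mgf Y μ (-s) = Real.exp (-s ^ σ)) (m : ℕ) {s : ℝ} (hs : 0 < s) :
    ∫ ω, Y ω ^ m * Real.exp (-s * Y ω) ∂μ =
      Real.exp (-s ^ σ) * (genFactPoly m σ).eval (s ^ σ) / s ^ m := by
  have hnear : (fun s ↦ mgf Y μ (-s)) =ᶠ[𝓝 s] fun s ↦ Real.exp (-s ^ σ) := by
    filter_upwards [Ioi_mem_nhds hs] with y hy using hY y hy
  have hmem := Iio_subset_interior_integrableExpSet_of_mgf_eq hY (neg_lt_zero.mpr hs)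
  have hderiv := hnear.iteratedDeriv_eq m
  rw [iteratedDeriv_comp_neg, iteratedDeriv_exp_neg_rpow m σ hs, smul_eq_mul,
    iteratedDeriv_mgf hmem] at hderiv
  exact mul_left_cancel₀ (pow_ne_zero m (by norm_num)) hderiv

theorem sum_genFactCoeff_mul_pow_eq_integral
    (hY : ∀ s > 0, mgf Y μ (-s) = Real.exp (-s ^ σ)) {m : ℕ} (hm : m ≠ 0) {s : ℝ} (hs : 0 < s) :
    ∑ k ∈ Finset.Icc 1 m, genFactCoeff m k σ * (s ^ σ) ^ k =
      Real.exp (s ^ σ) * s ^ m * ∫ ω, Y ω ^ m * Real.exp (-s * Y ω) ∂μ := by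
  rw [← eval_genFactPoly hm, integral_pow_mul_exp_neg_mul_of_mgf_eq hY m hs, Real.exp_neg]
  field_simp

end StableMoments

/-- The error function `erf y = (2 / √π) ∫₀ʸ e^{-t²} dt`. -/
noncomputable def erf (y : ℝ) : ℝ := 2 / √Real.pi * ∫ t in (0 : ℝ)..y, Real.exp (-t ^ 2)

lemma hasDerivAt_erf (y : ℝ) : HasDerivAt erf (2 / √Real.pi * Real.exp (-y ^ 2)) y := by
  have hcont : Continuous fun t : ℝ ↦ Real.exp (-t ^ 2) := by fun_prop
  exact (hcont.integral_hasStrictDerivAt 0 y).hasDerivAt.const_mul _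

lemma erf_neg (y : ℝ) : erf (-y) = -erf y := by
  have h := intervalIntegral.integral_comp_neg (fun t : ℝ ↦ Real.exp (-t ^ 2)) (a := 0) (b := y)
  simp only [neg_sq, neg_zero] at h
  rw [erf, erf, h, intervalIntegral.integral_symm, mul_neg]

lemma tendsto_erf_atTop : Tendsto erf atTop (𝓝 1) := by
  have hint := integrable_exp_neg_mul_sq one_pos
  have hval := integral_gaussian_Ioi 1
  simp only [neg_one_mul, div_one] at hint hval
  have hlim := (intervalIntegral_tendsto_integral_Ioi 0 hint.integrableOn tendsto_id).const_mul
    (2 / √Real.pi)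
  rwa [hval, div_mul_div_cancel₀ (by positivity), div_self two_ne_zero] at hlim

lemma tendsto_erf_atBot : Tendsto erf atBot (𝓝 (-1)) := by
  refine (tendsto_erf_atTop.comp tendsto_neg_atBot_atTop).neg.congr fun y ↦ ?_
  rw [Function.comp_apply, erf_neg, neg_neg]

lemma tendsto_mul_sqrt_add_div_sqrt_atTop {θ : ℝ} (c : ℝ) (hθ : 0 < θ) :
    Tendsto (fun x ↦ θ * √x + c / √x) atTop atTop :=
  (Real.tendsto_sqrt_atTop.const_mul_atTop hθ).atTop_add
    (Real.tendsto_sqrt_atTop.const_div_atTop c)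

lemma tendsto_mul_sqrt_add_div_sqrt_nhdsGT_zero (θ : ℝ) {c : ℝ} (hc : 0 < c) :
    Tendsto (fun x ↦ θ * √x + c / √x) (𝓝[>] 0) atTop := by
  have hsqrt : Tendsto Real.sqrt (𝓝[>] 0) (𝓝[>] 0) := by
    refine tendsto_nhdsWithin_of_tendsto_nhds_of_eventually_within _ ?_ ?_
    · exact (Real.sqrt_zero ▸ Real.continuous_sqrt.tendsto 0).mono_left nhdsWithin_le_nhds
    · filter_upwards [self_mem_nhdsWithin] with x hx using Real.sqrt_pos.mpr hx
  exact ((hsqrt.mono_right nhdsWithin_le_nhds).const_mul θ).add_atTop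
    ((tendsto_inv_nhdsGT_zero.comp hsqrt).const_mul_atTop hc)

theorem integral_Ioi_of_hasDerivAt_of_nonneg_of_tendsto {F f : ℝ → ℝ} {a b c : ℝ}
    (hderiv : ∀ x ∈ Set.Ioi a, HasDerivAt F (f x) x) (hf : ∀ x ∈ Set.Ioi a, 0 ≤ f x)
    (ha : Tendsto F (𝓝[>] a) (𝓝 c)) (htop : Tendsto F atTop (𝓝 b)) :
    ∫ x in Set.Ioi a, f x = b - c := by
  have heq : ∀ x ∈ Set.Ioi a, Function.update F a c x = F x := fun x hx ↦
    Function.update_of_ne (ne_of_gt hx) c F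
  have hcont : ContinuousWithinAt (Function.update F a c) (Set.Ici a) a := by
    rwa [continuousWithinAt_update_same, Set.Ici_sdiff_left]
  have hderiv' : ∀ x ∈ Set.Ioi a, HasDerivAt (Function.update F a c) (f x) x := fun x hx ↦
    (hderiv x hx).congr_of_eventuallyEq (Filter.eventually_of_mem (Ioi_mem_nhds hx) heq)
  have htop' : Tendsto (Function.update F a c) atTop (𝓝 b) :=
    htop.congr' (Filter.eventually_of_mem (Ioi_mem_atTop a) fun x hx ↦ (heq x hx).symm)
  simpa only [Function.update_self] using
    integral_Ioi_of_hasDerivAt_of_nonneg hcont hderiv' hf htop'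

/-- The density `f_{1/2}` of the positive `1/2`-stable law (the Lévy distribution of scale `1/2`);
only its values on `(0, ∞)` are meaningful. -/
noncomputable def halfStablePDF (x : ℝ) : ℝ :=
  (1 / (2 * √Real.pi)) * x ^ (-(3 / 2) : ℝ) * Real.exp (-1 / (4 * x))

lemma measurable_halfStablePDF : Measurable halfStablePDF := by
  unfold halfStablePDF
  fun_prop

lemma halfStablePDF_nonneg {x : ℝ} (hx : 0 ≤ x) : 0 ≤ halfStablePDF x := by
  unfold halfStablePDF
  positivity

lemma hasDerivAt_erf_mul_sqrt_add_div_sqrt (θ c : ℝ) {x : ℝ} (hx : 0 < x) :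
    HasDerivAt (fun x ↦ erf (θ * √x + c / √x))
      (2 / √Real.pi * (Real.exp (-(2 * θ * c)) * Real.exp (-x * θ ^ 2) * Real.exp (-c ^ 2 / x)) *
        (θ / (2 * √x) - c / (2 * (x * √x)))) x := by
  have hs : 0 < √x := Real.sqrt_pos.mpr hx
  have hsq : √x ^ 2 = x := Real.sq_sqrt hx.le
  have hsqrt := Real.hasDerivAt_sqrt hx.ne'
  have harg : HasDerivAt (fun x ↦ θ * √x + c / √x) (θ / (2 * √x) - c / (2 * (x * √x))) x := by
    refine ((hsqrt.const_mul θ).add ((hsqrt.inv hs.ne').const_mul c)).congr_deriv ?_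
    rw [hsq]
    field_simp
    ring
  have hexp : Real.exp (-(θ * √x + c / √x) ^ 2) =
      Real.exp (-(2 * θ * c)) * Real.exp (-x * θ ^ 2) * Real.exp (-c ^ 2 / x) := by
    rw [← Real.exp_add, ← Real.exp_add, add_sq, mul_pow, div_pow, hsq]
    congr 1
    field_simp
    ring
  exact hexp ▸ (hasDerivAt_erf _).comp x harg

/-- A primitive on `(0, ∞)` of the exponentially tilted density `x ↦ e^{-xθ²} f_{1/2}(x)`. -/
noncomputable def tiltedHalfStablePrimitive (θ x : ℝ) : ℝ :=
  (Real.exp (-θ) * erf (θ * √x + -(1 / 2) / √x) - Real.exp θ * erf (θ * √x + 1 / 2 / √x)) / 2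

lemma hasDerivAt_tiltedHalfStablePrimitive (θ : ℝ) {x : ℝ} (hx : 0 < x) :
    HasDerivAt (tiltedHalfStablePrimitive θ) (Real.exp (-x * θ ^ 2) * halfStablePDF x) x := by
  have hrpow : x ^ (-(3 / 2) : ℝ) = 1 / (x * √x) := by
    rw [Real.rpow_neg hx.le, show (3 / 2 : ℝ) = 1 + 1 / 2 by norm_num, Real.rpow_add hx,
      Real.rpow_one, ← Real.sqrt_eq_rpow, one_div]
  have hexp : Real.exp (-(1 / 2) ^ 2 / x) = Real.exp (-1 / (4 * x)) := by
    congr 1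
    field_simp
    norm_num
  have hplus := hasDerivAt_erf_mul_sqrt_add_div_sqrt θ (1 / 2) hx
  have hminus := hasDerivAt_erf_mul_sqrt_add_div_sqrt θ (-(1 / 2)) hx
  refine (((hminus.const_mul _).sub (hplus.const_mul _)).div_const 2).congr_deriv ?_
  rw [halfStablePDF, hrpow, neg_sq (1 / 2 : ℝ), hexp, show -(2 * θ * -(1 / 2)) = θ by ring,
    show -(2 * θ * (1 / 2)) = -θ by ring, Real.exp_neg θ]
  field_simp
  ring

lemma tendsto_tiltedHalfStablePrimitive_nhdsGT_zero (θ : ℝ) :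
    Tendsto (tiltedHalfStablePrimitive θ) (𝓝[>] 0) (𝓝 (-Real.cosh θ)) := by
  have hcosh : (Real.exp (-θ) * -1 - Real.exp θ * 1) / 2 = -Real.cosh θ := by
    rw [Real.cosh_eq]
    ring
  have hplus := tendsto_mul_sqrt_add_div_sqrt_nhdsGT_zero θ one_half_pos
  have hminus : Tendsto (fun x ↦ θ * √x + -(1 / 2) / √x) (𝓝[>] 0) atBot := by
    refine (tendsto_neg_atTop_atBot.comp
      (tendsto_mul_sqrt_add_div_sqrt_nhdsGT_zero (-θ) one_half_pos)).congr fun x ↦ ?_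
    simp only [Function.comp_apply]
    ring
  exact hcosh ▸ (((tendsto_erf_atBot.comp hminus).const_mul _).sub
    ((tendsto_erf_atTop.comp hplus).const_mul _)).div_const 2

lemma tendsto_tiltedHalfStablePrimitive_atTop {θ : ℝ} (hθ : 0 < θ) :
    Tendsto (tiltedHalfStablePrimitive θ) atTop (𝓝 (-Real.sinh θ)) := by
  have hsinh : (Real.exp (-θ) * 1 - Real.exp θ * 1) / 2 = -Real.sinh θ := by
    rw [Real.sinh_eq]
    ring
  have herf (c : ℝ) : Tendsto (fun x ↦ erf (θ * √x + c / √x)) atTop (𝓝 1) :=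
    tendsto_erf_atTop.comp (tendsto_mul_sqrt_add_div_sqrt_atTop c hθ)
  exact hsinh ▸ (((herf _).const_mul _).sub ((herf _).const_mul _)).div_const 2

theorem integral_exp_neg_mul_sq_mul_halfStablePDF {θ : ℝ} (hθ : 0 < θ) :
    ∫ x in Set.Ioi 0, Real.exp (-x * θ ^ 2) * halfStablePDF x = Real.exp (-θ) := by
  rw [integral_Ioi_of_hasDerivAt_of_nonneg_of_tendsto
    (fun x hx ↦ hasDerivAt_tiltedHalfStablePrimitive θ hx)
    (fun x hx ↦ mul_nonneg (Real.exp_nonneg _) (halfStablePDF_nonneg (le_of_lt hx)))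
    (tendsto_tiltedHalfStablePrimitive_nhdsGT_zero θ) (tendsto_tiltedHalfStablePrimitive_atTop hθ),
    neg_sub_neg, Real.cosh_sub_sinh]

/-- The positive `1/2`-stable law, whose Laplace transform is `s ↦ exp (-√s)`. -/
noncomputable def halfStableMeasure : Measure ℝ :=
  (volume.restrict (Set.Ioi 0)).withDensity fun x ↦ ENNReal.ofReal (halfStablePDF x)

lemma integral_halfStableMeasure (g : ℝ → ℝ) :
    ∫ x, g x ∂halfStableMeasure = ∫ x in Set.Ioi 0, g x * halfStablePDF x := by
  rw [halfStableMeasure, integral_withDensity_eq_integral_toReal_smul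
    measurable_halfStablePDF.ennreal_ofReal (ae_of_all _ fun _ ↦ ENNReal.ofReal_lt_top)]
  refine setIntegral_congr_fun measurableSet_Ioi fun x hx ↦ ?_
  simp only [ENNReal.toReal_ofReal (halfStablePDF_nonneg (le_of_lt hx)), smul_eq_mul, mul_comm]

lemma mgf_id_halfStableMeasure_neg {s : ℝ} (hs : 0 < s) :
    mgf id halfStableMeasure (-s) = Real.exp (-s ^ (1 / 2 : ℝ)) := by
  rw [← Real.sqrt_eq_rpow, ← integral_exp_neg_mul_sq_mul_halfStablePDF (Real.sqrt_pos.mpr hs),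
    mgf, integral_halfStableMeasure, Real.sq_sqrt hs.le]
  simp only [id, neg_mul, mul_comm s]

/-- Generating identity for generalized factorial coefficients with `σ = 1/2`:
`∑_{k=1}^m C(m,k;1/2) θ^k = e^θ θ^{2m} ∫_0^∞ x^m e^{−xθ²} f_{1/2}(x) dx`. -/
theorem stmt13 (m : ℕ) (hm : 1 ≤ m) (θ : ℝ) (hθ : 0 < θ) :
    ∑ k ∈ Finset.Icc 1 m, genFactCoeff m k (1 / 2) * θ ^ k
      = Real.exp θ * θ ^ (2 * m) *
        ∫ x in Set.Ioi (0 : ℝ),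
          x ^ m * Real.exp (-x * θ ^ 2) *
            ((1 / (2 * Real.sqrt Real.pi)) * x ^ (-(3 / 2) : ℝ) * Real.exp (-1 / (4 * x))) := by
  have hsqrt : (θ ^ 2) ^ (1 / 2 : ℝ) = θ := by rw [← Real.sqrt_eq_rpow, Real.sqrt_sq hθ.le]
  have hgen := sum_genFactCoeff_mul_pow_eq_integral
    (fun _ ↦ mgf_id_halfStableMeasure_neg) (Nat.one_le_iff_ne_zero.mp hm) (sq_pos_of_pos hθ)
  rw [integral_halfStableMeasure, hsqrt, ← pow_mul] at hgen
  simpa only [halfStablePDF, id, neg_mul, mul_comm (θ ^ 2)] using hgen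
end

section
/- Let α > 0 and let m ≥ 1 be an integer. Then α·2^{m}·∫_0^∞ x^{m}·(1 + 2x)^{−(m + 1/2)}·exp(−α·(√(1+2x) − 1)) dx = ∫_0^∞ ∫_0^1 exp(−(x/y)·α² + α)·( Γ(m+1)/(Γ(1/2)·Γ(m + 1/2)) )·y^{−1/2}·(1−y)^{m−1/2}·(1/4)·x^{−2}·exp(−1/(4x)) dy dx. Equivalently, the probability p_{f_v}(m; m, α, 1/2) equals ((1/2)_{(m)}/Γ(m+1))·E[exp(−(X/Y)·α² + α)], where Y is Beta(1/2, m + 1/2) distributed and X is an independent random variable with density (Γ(3/2)/Γ(2))·x^{−1/2}·f_{1/2}(x) = (1/4)·x^{−2}·exp(−1/(4x)) on (0,∞). -/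
/-!
Let `φ` be the density of `S⁻²`, where `S` is exponential of rate `α`. Substituting
`v = 1 / (1 + 2x)` turns the left-hand side into `e^α ∫₀¹ φ(v) (1 - v)^m dv`. On the right, all
integrands are nonnegative, so the order of integration is free. For fixed `y`, the Laplace
transform `y^(-1/2) ∫ exp(-α² x / y) (1/4) x⁻² e^(-1/(4x)) dx` is a Bessel integral of order one,
which the substitution `v = y / cosh² u` identifies with the Abel transform
`∫₀^y φ(v) (y - v)^(-1/2) dv`. Exchanging `y` and `v` leaves the beta integral
`∫_v^1 (y - v)^(-1/2) (1 - y)^(m - 1/2) dy = B(1/2, m + 1/2) (1 - v)^m`, and the constant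
`B(1/2, m + 1/2)` is the normalisation of the beta density.
-/

open MeasureTheory

open Set ProbabilityTheory
open scoped ENNReal

section LebesgueIntegral

lemma lintegral_ofReal_eq_of_bijOn {f f' : ℝ → ℝ} {s t : Set ℝ} (hs : MeasurableSet s)
    (hf : BijOn f s t) (hf' : ∀ x ∈ s, HasDerivAt f (f' x) x) (g : ℝ → ℝ) :
    ∫⁻ y in t, ENNReal.ofReal (g y) = ∫⁻ x in s, ENNReal.ofReal (|f' x| * g (f x)) := by
  rw [← hf.image_eq, lintegral_image_eq_lintegral_abs_deriv_mul hs
    (fun x hx ↦ (hf' x hx).hasDerivWithinAt) hf.injOn]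
  simp only [ENNReal.ofReal_mul (abs_nonneg _)]

lemma lintegral_eq_setLIntegral_Ioi_add_neg {f : ℝ → ℝ≥0∞} (hf : Measurable f) :
    ∫⁻ x, f x = ∫⁻ x in Ioi 0, (f x + f (-x)) := by
  have h_neg : ∫⁻ x in Iic 0, f x = ∫⁻ x in Ioi 0, f (-x) := by
    have h_preimage := (Measure.measurePreserving_neg (volume : Measure ℝ))
      |>.setLIntegral_comp_preimage (measurableSet_Iio (a := 0)) hf
    rw [← setLIntegral_congr Iio_ae_eq_Iic, ← h_preimage]
    simp
  rw [lintegral_add_left hf, ← h_neg, ← lintegral_add_compl f (measurableSet_Ioi (a := 0)),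
    compl_Ioi]

lemma lintegral_lintegral_Ioo_swap {a b : ℝ} {f : ℝ → ℝ → ℝ≥0∞}
    (hf : Measurable (Function.uncurry f)) :
    ∫⁻ y in Ioo a b, ∫⁻ v in Ioo a y, f y v = ∫⁻ v in Ioo a b, ∫⁻ y in Ioo v b, f y v := by
  set F : ℝ × ℝ → ℝ≥0∞ := {p : ℝ × ℝ | p.2 < p.1}.indicator (Function.uncurry f)
  have hF : Measurable F := hf.indicator (measurableSet_lt measurable_snd measurable_fst)
  have h_left : ∀ y ∈ Ioo a b, ∫⁻ v in Ioo a y, f y v = ∫⁻ v in Ioo a b, F (y, v) := by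
    intro y hy
    have h_inter : Iio y ∩ Ioo a b = Ioo a y := by grind
    rw [← h_inter, ← setLIntegral_indicator measurableSet_Iio]
    rfl
  have h_right : ∀ v ∈ Ioo a b, ∫⁻ y in Ioo v b, f y v = ∫⁻ y in Ioo a b, F (y, v) := by
    intro v hv
    have h_inter : Ioi v ∩ Ioo a b = Ioo v b := by grind
    rw [← h_inter, ← setLIntegral_indicator measurableSet_Ioi]
    rfl
  rw [setLIntegral_congr_fun measurableSet_Ioo h_left,
    setLIntegral_congr_fun measurableSet_Ioo h_right]
  exact lintegral_lintegral_swap hF.aemeasurable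

lemma integral_integral_eq_toReal_lintegral_lintegral {X Y : Type*} [MeasurableSpace X]
    [MeasurableSpace Y] {μ : Measure X} {ν : Measure Y} [SFinite ν] {f : X → Y → ℝ}
    (hf : Measurable (Function.uncurry f)) (hf_nonneg : ∀ᵐ x ∂μ, 0 ≤ᵐ[ν] f x)
    (hf_int : ∀ᵐ x ∂μ, Integrable (f x) ν) :
    ∫ x, ∫ y, f x y ∂ν ∂μ = (∫⁻ x, ∫⁻ y, ENNReal.ofReal (f x y) ∂ν ∂μ).toReal := by
  rw [integral_eq_lintegral_of_nonneg_ae (hf_nonneg.mono fun x hx ↦ integral_nonneg_of_ae hx)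
    hf.stronglyMeasurable.integral_prod_right.aestronglyMeasurable]
  congr 1
  refine lintegral_congr_ae ?_
  filter_upwards [hf_nonneg, hf_int] with x hx_nonneg hx_int
  exact ofReal_integral_eq_lintegral_ofReal hx_int hx_nonneg

end LebesgueIntegral

section Beta

variable {p q : ℝ}

lemma lintegral_beta (hp : 0 < p) (hq : 0 < q) :
    ∫⁻ w in Ioo 0 1, ENNReal.ofReal (w ^ (p - 1) * (1 - w) ^ (q - 1)) =
      ENNReal.ofReal (beta p q) := by
  have hB := beta_pos hp hq
  have h_one := lintegral_betaPDF_eq_one hp hq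
  simp_rw [lintegral_betaPDF, mul_assoc, ENNReal.ofReal_mul (one_div_pos.2 hB).le] at h_one
  rw [lintegral_const_mul _ (by fun_prop)] at h_one
  rw [← mul_one (ENNReal.ofReal (beta p q)), ← h_one, ← mul_assoc, ← ENNReal.ofReal_mul hB.le,
    mul_one_div_cancel hB.ne', ENNReal.ofReal_one, one_mul]

lemma integrableOn_beta (hp : 0 < p) (hq : 0 < q) :
    IntegrableOn (fun w : ℝ ↦ w ^ (p - 1) * (1 - w) ^ (q - 1)) (Ioo 0 1) := by
  refine (lintegral_ofReal_ne_top_iff_integrable (by fun_prop) ?_).1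
    (by rw [lintegral_beta hp hq]; exact ENNReal.ofReal_ne_top)
  refine ae_restrict_of_forall_mem measurableSet_Ioo fun w hw ↦ ?_
  exact mul_nonneg (Real.rpow_nonneg hw.1.le _) (Real.rpow_nonneg (sub_nonneg.2 hw.2.le) _)

lemma bijOn_affine_Ioo {a b : ℝ} (hab : a < b) :
    BijOn (fun w ↦ a + (b - a) * w) (Ioo 0 1) (Ioo a b) := by
  have h_len : 0 < b - a := sub_pos.2 hab
  refine InvOn.bijOn (f' := fun y ↦ (y - a) / (b - a)) ⟨fun w _ ↦ ?_, fun y _ ↦ ?_⟩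
    (fun w hw ↦ ⟨?_, ?_⟩) (fun y hy ↦ ⟨div_pos (sub_pos.2 hy.1) h_len, ?_⟩)
  · simp [h_len.ne']
  · field_simp
    ring
  · nlinarith [hw.1]
  · nlinarith [hw.2]
  · exact (div_lt_one h_len).2 (by linarith [hy.2])

lemma lintegral_beta_Ioo (hp : 0 < p) (hq : 0 < q) {a b : ℝ} (hab : a < b) :
    ∫⁻ y in Ioo a b, ENNReal.ofReal ((y - a) ^ (p - 1) * (b - y) ^ (q - 1)) =
      ENNReal.ofReal (beta p q * (b - a) ^ (p + q - 1)) := by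
  have h_len : 0 < b - a := sub_pos.2 hab
  have h_deriv (w : ℝ) : HasDerivAt (fun w ↦ a + (b - a) * w) (b - a) w := by
    simpa using ((hasDerivAt_id w).const_mul (b - a)).const_add a
  rw [lintegral_ofReal_eq_of_bijOn measurableSet_Ioo (bijOn_affine_Ioo hab)
    (fun w _ ↦ h_deriv w), mul_comm (beta p q), ENNReal.ofReal_mul (by positivity),
    ← lintegral_beta hp hq, ← lintegral_const_mul _ (by fun_prop)]
  refine setLIntegral_congr_fun measurableSet_Ioo fun w hw ↦ ?_
  have h_pow : (b - a) ^ (p + q - 1) = (b - a) * (b - a) ^ (p - 1) * (b - a) ^ (q - 1) := by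
    rw [← Real.rpow_one_add' h_len.le (by linarith), ← Real.rpow_add h_len]
    ring_nf
  rw [← ENNReal.ofReal_mul (by positivity), h_pow, abs_of_pos h_len, add_sub_cancel_left,
    show b - (a + (b - a) * w) = (b - a) * (1 - w) by ring,
    Real.mul_rpow h_len.le hw.1.le, Real.mul_rpow h_len.le (sub_nonneg.2 hw.2.le)]
  ring_nf

lemma lintegral_lintegral_mul_beta (hp : 0 < p) (hq : 0 < q) {a b : ℝ} {φ : ℝ → ℝ≥0∞}
    (hφ : Measurable φ) :
    ∫⁻ y in Ioo a b, ∫⁻ v in Ioo a y,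
        φ v * ENNReal.ofReal ((y - v) ^ (p - 1) * (b - y) ^ (q - 1)) =
      ∫⁻ v in Ioo a b, φ v * ENNReal.ofReal (beta p q * (b - v) ^ (p + q - 1)) := by
  rw [lintegral_lintegral_Ioo_swap (by simp only [Function.uncurry_def]; fun_prop)]
  refine setLIntegral_congr_fun measurableSet_Ioo fun v hv ↦ ?_
  rw [lintegral_const_mul _ (by fun_prop), lintegral_beta_Ioo hp hq hv.2]

end Beta

section Bessel

lemma bijOn_mul_exp {c : ℝ} (hc : 0 < c) : BijOn (fun u ↦ c * Real.exp u) univ (Ioi 0) := by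
  refine InvOn.bijOn (f' := fun x ↦ Real.log (x / c)) ⟨fun u _ ↦ ?_, fun x hx ↦ ?_⟩
    (fun u _ ↦ mul_pos hc (Real.exp_pos u)) (mapsTo_univ _ _)
  · simp [hc.ne']
  · simp only [Real.exp_log (div_pos hx hc)]
    field_simp

/- For `0 < z` both sides are `2 * c ^ (-ν) * K_ν(z)`, with `K_ν` the modified Bessel function of
the second kind: put `x = c * exp u` and add the contributions of `u` and `-u`. -/
lemma lintegral_rpow_mul_exp_neg_mul_add_div {c : ℝ} (hc : 0 < c) (ν z : ℝ) :
    ∫⁻ x in Ioi 0, ENNReal.ofReal (x ^ (-ν - 1) * Real.exp (-(z / 2 * (x / c + c / x)))) =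
      ∫⁻ u in Ioi 0,
        ENNReal.ofReal (2 * c ^ (-ν) * Real.cosh (ν * u) * Real.exp (-(z * Real.cosh u))) := by
  set k : ℝ → ℝ := fun u ↦ c ^ (-ν) * Real.exp (-(ν * u)) * Real.exp (-(z * Real.cosh u))
  have hk_nonneg (u : ℝ) : 0 ≤ k u := by positivity
  have h_subst (u : ℝ) : |c * Real.exp u| * ((c * Real.exp u) ^ (-ν - 1) *
      Real.exp (-(z / 2 * (c * Real.exp u / c + c / (c * Real.exp u))))) = k u := by
    have h_arg : -(z / 2 * (c * Real.exp u / c + c / (c * Real.exp u))) = -(z * Real.cosh u) := by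
      rw [Real.cosh_eq, Real.exp_neg]
      field_simp
    have h_pow : c * Real.exp u * (c * Real.exp u) ^ (-ν - 1) = c ^ (-ν) * Real.exp (-(ν * u)) := by
      have h_pos : 0 < c * Real.exp u := by positivity
      rw [Real.rpow_sub_one h_pos.ne', mul_div_cancel₀ _ h_pos.ne',
        Real.mul_rpow hc.le (Real.exp_pos u).le, ← Real.exp_mul]
      ring_nf
    rw [abs_of_pos (by positivity), h_arg, ← mul_assoc, h_pow]
  have h_fold (u : ℝ) : k u + k (-u) =
      2 * c ^ (-ν) * Real.cosh (ν * u) * Real.exp (-(z * Real.cosh u)) := by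
    simp only [k, Real.cosh_neg, Real.cosh_eq (ν * u), mul_neg, neg_neg]
    ring
  rw [lintegral_ofReal_eq_of_bijOn MeasurableSet.univ (bijOn_mul_exp hc)
    fun u _ ↦ (Real.hasDerivAt_exp u).const_mul c, setLIntegral_univ]
  simp_rw [h_subst]
  rw [lintegral_eq_setLIntegral_Ioi_add_neg (by fun_prop)]
  simp_rw [← ENNReal.ofReal_add (hk_nonneg _) (hk_nonneg _), h_fold]

end Bessel

section Densities

/-- The density on `(0, ∞)` of the polynomially tilted stable variable `X`, namely
`(Γ(3/2) / Γ(2)) x^(-1/2) f_{1/2}(x)` with its constants evaluated. -/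
noncomputable def tiltedStablePDF (x : ℝ) : ℝ :=
  1 / 4 * x ^ (-(2 : ℝ)) * Real.exp (-1 / (4 * x))

/-- The density on `(0, ∞)` of `S⁻²` for `S` exponential of rate `α`: the mixing density through
which both sides of the Monte Carlo identity are expressed. -/
noncomputable def invSqExponentialPDF (α v : ℝ) : ℝ :=
  α / 2 * v ^ (-(3 / 2) : ℝ) * Real.exp (-α / √v)

@[fun_prop]
lemma measurable_tiltedStablePDF : Measurable tiltedStablePDF := by
  unfold tiltedStablePDF
  fun_prop

@[fun_prop]
lemma measurable_invSqExponentialPDF (α : ℝ) : Measurable (invSqExponentialPDF α) := by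
  unfold invSqExponentialPDF
  fun_prop

lemma tiltedStablePDF_nonneg {x : ℝ} (hx : 0 ≤ x) : 0 ≤ tiltedStablePDF x := by
  unfold tiltedStablePDF
  positivity

lemma invSqExponentialPDF_nonneg {α v : ℝ} (hα : 0 ≤ α) (hv : 0 ≤ v) :
    0 ≤ invSqExponentialPDF α v := by
  unfold invSqExponentialPDF
  positivity

end Densities

section Transforms

variable {α : ℝ}

lemma bijOn_div_cosh_sq {y : ℝ} (hy : 0 < y) :
    BijOn (fun u ↦ y / Real.cosh u ^ 2) (Ioi 0) (Ioo 0 y) := by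
  refine InvOn.bijOn (f' := fun v ↦ Real.arcosh √(y / v)) ⟨fun u hu ↦ ?_, fun v hv ↦ ?_⟩
    (fun u hu ↦ ⟨by positivity, ?_⟩) (fun v hv ↦ Real.arcosh_pos ?_)
  · simp only [div_div_cancel₀ hy.ne', Real.sqrt_sq (Real.cosh_pos u).le,
      Real.arcosh_cosh (le_of_lt hu)]
  · have h_one_le : 1 ≤ √(y / v) := Real.one_le_sqrt.2 ((one_le_div hv.1).2 hv.2.le)
    simp only [Real.cosh_arcosh h_one_le, Real.sq_sqrt (div_pos hy hv.1).le,
      div_div_cancel₀ hy.ne']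
  · exact div_lt_self hy (one_lt_pow₀ (Real.one_lt_cosh.2 (ne_of_gt hu)) two_ne_zero)
  · exact Real.lt_sqrt_of_sq_lt (by simpa using (one_lt_div hv.1).2 hv.2)

lemma hasDerivAt_div_cosh_sq (y u : ℝ) :
    HasDerivAt (fun u ↦ y / Real.cosh u ^ 2) (-(2 * y * Real.sinh u / Real.cosh u ^ 3)) u := by
  convert! (((Real.hasDerivAt_cosh u).fun_pow 2).fun_inv (by positivity)).const_mul y using 1
  push_cast
  field_simp

lemma lintegral_exp_mul_tiltedStablePDF_eq_cosh (hα : 0 < α) {y : ℝ} (hy : 0 < y) :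
    ∫⁻ x in Ioi 0, ENNReal.ofReal
        (y ^ (-(1 / 2) : ℝ) * (Real.exp (-(x / y) * α ^ 2) * tiltedStablePDF x)) =
      ∫⁻ u in Ioi 0,
        ENNReal.ofReal (α / y * Real.cosh u * Real.exp (-(α / √y * Real.cosh u))) := by
  have h_sq : √y ^ 2 = y := Real.sq_sqrt hy.le
  set c : ℝ := √y / (2 * α) with hc_def
  have h_const : 0 ≤ 1 / (4 * √y) := by positivity
  have h_bessel : ∀ x ∈ Ioi (0 : ℝ),
      y ^ (-(1 / 2) : ℝ) * (Real.exp (-(x / y) * α ^ 2) * tiltedStablePDF x) =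
        1 / (4 * √y) * (x ^ (-(1 : ℝ) - 1) * Real.exp (-(α / √y / 2 * (x / c + c / x)))) := by
    intro x (hx : 0 < x)
    have h_arg : -(x / y) * α ^ 2 + -1 / (4 * x) = -(α / √y / 2 * (x / c + c / x)) := by
      rw [hc_def]
      field_simp
      rw [h_sq]
      ring
    have h_pow : (-(1 : ℝ) - 1) = -2 := by norm_num
    rw [tiltedStablePDF, Real.rpow_neg hy.le, ← Real.sqrt_eq_rpow, ← h_arg, Real.exp_add, h_pow]
    field_simp
  rw [setLIntegral_congr_fun measurableSet_Ioi fun x hx ↦ congrArg _ (h_bessel x hx)]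
  simp_rw [ENNReal.ofReal_mul h_const]
  rw [lintegral_const_mul _ (by fun_prop),
    lintegral_rpow_mul_exp_neg_mul_add_div (by positivity), ← lintegral_const_mul _ (by fun_prop)]
  simp_rw [← ENNReal.ofReal_mul h_const, Real.rpow_neg_one, one_mul]
  refine lintegral_congr fun u ↦ congrArg _ ?_
  rw [hc_def]
  field_simp
  rw [h_sq]
  ring

lemma lintegral_invSqExponentialPDF_mul_rpow (α : ℝ) {y : ℝ} (hy : 0 < y) :
    ∫⁻ v in Ioo 0 y, ENNReal.ofReal (invSqExponentialPDF α v * (y - v) ^ (-(1 / 2) : ℝ)) =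
      ∫⁻ u in Ioi 0,
        ENNReal.ofReal (α / y * Real.cosh u * Real.exp (-(α / √y * Real.cosh u))) := by
  rw [lintegral_ofReal_eq_of_bijOn measurableSet_Ioi (bijOn_div_cosh_sq hy)
    fun u _ ↦ hasDerivAt_div_cosh_sq y u]
  refine setLIntegral_congr_fun measurableSet_Ioi fun u hu ↦ congrArg _ ?_
  have h_sq : √y ^ 2 = y := Real.sq_sqrt hy.le
  have h_sinh : 0 < Real.sinh u := Real.sinh_pos_iff.2 hu
  have h_v : y / Real.cosh u ^ 2 = (√y / Real.cosh u) ^ 2 := by rw [div_pow, h_sq]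
  have h_sub : y - y / Real.cosh u ^ 2 = (√y * Real.sinh u / Real.cosh u) ^ 2 := by
    rw [div_pow, mul_pow, h_sq, Real.sinh_sq]
    field_simp
  have h_half : (y - y / Real.cosh u ^ 2) ^ (-(1 / 2) : ℝ) =
      (√y * Real.sinh u / Real.cosh u)⁻¹ := by
    rw [h_sub, Real.rpow_neg (sq_nonneg _), ← Real.sqrt_eq_rpow, Real.sqrt_sq (by positivity)]
  have h_three_halves : ((√y / Real.cosh u) ^ 2) ^ (-(3 / 2) : ℝ) = ((√y / Real.cosh u) ^ 3)⁻¹ := by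
    rw [← Real.rpow_natCast_mul (by positivity), ← Real.rpow_natCast,
      ← Real.rpow_neg (by positivity)]
    norm_num
  rw [h_half, h_v, invSqExponentialPDF, h_three_halves, Real.sqrt_sq (by positivity), abs_neg,
    abs_of_pos (by positivity), neg_div, div_div_eq_mul_div, mul_div_right_comm]
  field_simp
  rw [show √y ^ 4 = (√y ^ 2) ^ 2 by ring, h_sq, mul_comm]

lemma lintegral_exp_mul_tiltedStablePDF (hα : 0 < α) {y : ℝ} (hy : 0 < y) :
    ∫⁻ x in Ioi 0, ENNReal.ofReal
        (y ^ (-(1 / 2) : ℝ) * (Real.exp (-(x / y) * α ^ 2) * tiltedStablePDF x)) =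
      ∫⁻ v in Ioo 0 y, ENNReal.ofReal (invSqExponentialPDF α v * (y - v) ^ (-(1 / 2) : ℝ)) := by
  rw [lintegral_exp_mul_tiltedStablePDF_eq_cosh hα hy, lintegral_invSqExponentialPDF_mul_rpow α hy]

lemma bijOn_inv_one_add_two_mul : BijOn (fun x : ℝ ↦ (1 + 2 * x)⁻¹) (Ioi 0) (Ioo 0 1) := by
  refine InvOn.bijOn (f' := fun v ↦ (v⁻¹ - 1) / 2) ⟨fun x _ ↦ ?_, fun v _ ↦ ?_⟩
    (fun x (hx : 0 < x) ↦ ⟨by positivity, inv_lt_one_of_one_lt₀ (by linarith)⟩)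
    (fun v hv ↦ half_pos (sub_pos.2 ((one_lt_inv₀ hv.1).2 hv.2)))
  · simp
  · simp only [mul_div_cancel₀ _ (two_ne_zero' ℝ), add_sub_cancel, inv_inv]

lemma hasDerivAt_inv_one_add_two_mul {x : ℝ} (hx : 1 + 2 * x ≠ 0) :
    HasDerivAt (fun x ↦ (1 + 2 * x)⁻¹) (-2 / (1 + 2 * x) ^ 2) x := by
  simpa using (((hasDerivAt_id x).const_mul 2).const_add 1).fun_inv hx

lemma lintegral_rpow_mul_exp_sqrt (α r : ℝ) :
    ∫⁻ x in Ioi 0, ENNReal.ofReal (α * 2 ^ r *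
        (x ^ r * (1 + 2 * x) ^ (-(r + 1 / 2)) * Real.exp (-α * (√(1 + 2 * x) - 1)))) =
      ∫⁻ v in Ioo 0 1,
        ENNReal.ofReal (Real.exp α * (invSqExponentialPDF α v * (1 - v) ^ r)) := by
  rw [lintegral_ofReal_eq_of_bijOn measurableSet_Ioi bijOn_inv_one_add_two_mul
    fun x (hx : 0 < x) ↦ hasDerivAt_inv_one_add_two_mul (by positivity)]
  refine setLIntegral_congr_fun measurableSet_Ioi fun x (hx : 0 < x) ↦ congrArg _ ?_
  have hw : 0 < 1 + 2 * x := by positivity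
  have h_sub : 1 - (1 + 2 * x)⁻¹ = 2 * x / (1 + 2 * x) := by
    field_simp
    ring
  have h_exp : Real.exp (-α * (√(1 + 2 * x) - 1)) = Real.exp α * Real.exp (-α * √(1 + 2 * x)) := by
    rw [← Real.exp_add]
    ring_nf
  have h_pow : (1 + 2 * x) ^ (-(r + 1 / 2)) =
      (1 + 2 * x) ^ (3 / 2 : ℝ) / ((1 + 2 * x) ^ 2 * (1 + 2 * x) ^ r) := by
    rw [← Real.rpow_natCast, ← Real.rpow_add hw, ← Real.rpow_sub hw]
    push_cast
    ring_nf
  rw [h_exp, h_pow, h_sub, invSqExponentialPDF, Real.sqrt_inv, div_inv_eq_mul,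
    Real.inv_rpow hw.le, Real.rpow_neg hw.le, inv_inv, abs_div, abs_neg, abs_two,
    abs_of_pos (by positivity), Real.div_rpow (by positivity) hw.le,
    Real.mul_rpow zero_le_two hx.le]
  field_simp

end Transforms

section MonteCarlo

/-- The integrand of the expectation `E[exp(-(X / Y) α² + α)]`, with `X` tilted stable and `Y`
independent and `Beta(1/2, r + 1/2)`. The real parameter `r` is the number `m` of observations, and
the formula is meant for `0 < x` and `0 < y < 1`. -/
noncomputable def betaTiltedStableIntegrand (α r x y : ℝ) : ℝ :=
  Real.exp (-(x / y) * α ^ 2 + α) *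
    (Real.Gamma (r + 1) / (Real.Gamma (1 / 2) * Real.Gamma (r + 1 / 2))) *
      y ^ (-(1 / 2) : ℝ) * (1 - y) ^ (r - 1 / 2) *
    tiltedStablePDF x

variable {α r : ℝ}

lemma betaTiltedStableIntegrand_eq (α r x y : ℝ) :
    betaTiltedStableIntegrand α r x y = Real.exp α / beta (1 / 2) (r + 1 / 2) *
      (1 - y) ^ (r + 1 / 2 - 1) *
        (y ^ (-(1 / 2) : ℝ) * (Real.exp (-(x / y) * α ^ 2) * tiltedStablePDF x)) := by
  have h_sum : 1 / 2 + (r + 1 / 2) = r + 1 := by ring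
  have h_sub : r + 1 / 2 - 1 = r - 1 / 2 := by ring
  rw [betaTiltedStableIntegrand, beta, h_sum, h_sub, Real.exp_add, div_div_eq_mul_div]
  ring

lemma measurable_betaTiltedStableIntegrand (α r : ℝ) :
    Measurable (Function.uncurry (betaTiltedStableIntegrand α r)) := by
  simp only [Function.uncurry_def, betaTiltedStableIntegrand]
  fun_prop

lemma betaTiltedStableIntegrand_nonneg (hr : -(1 / 2) < r) {x y : ℝ} (hx : 0 ≤ x)
    (hy : y ∈ Ioo (0 : ℝ) 1) : 0 ≤ betaTiltedStableIntegrand α r x y := by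
  have h_beta : 0 < beta (1 / 2) (r + 1 / 2) := beta_pos (by norm_num) (by linarith)
  have h_tilted := tiltedStablePDF_nonneg hx
  have h_y := hy.1
  have h_sub : 0 ≤ 1 - y := sub_nonneg.2 hy.2.le
  rw [betaTiltedStableIntegrand_eq]
  positivity

lemma integrableOn_betaTiltedStableIntegrand (α : ℝ) (hr : -(1 / 2) < r) {x : ℝ} (hx : 0 ≤ x) :
    IntegrableOn (betaTiltedStableIntegrand α r x) (Ioo 0 1) := by
  have h_half : (1 / 2 - 1 : ℝ) = -(1 / 2) := by norm_num
  have h_beta : IntegrableOn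
      (fun y : ℝ ↦ y ^ (1 / 2 - 1 : ℝ) * (1 - y) ^ (r + 1 / 2 - 1)) (Ioo 0 1) :=
    integrableOn_beta (by norm_num) (by linarith)
  have h_bdd : ∀ y ∈ Ioo (0 : ℝ) 1, ‖Real.exp (-(x / y) * α ^ 2)‖ ≤ 1 := by
    intro y hy
    rw [Real.norm_of_nonneg (Real.exp_pos _).le, Real.exp_le_one_iff, neg_mul]
    exact neg_nonpos.2 (mul_nonneg (div_nonneg hx hy.1.le) (sq_nonneg α))
  have h_prod := (Integrable.bdd_mul h_beta (c := 1)
    (Measurable.aestronglyMeasurable (by fun_prop))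
    (ae_restrict_of_forall_mem measurableSet_Ioo h_bdd)).const_mul
      (Real.exp α / beta (1 / 2) (r + 1 / 2) * tiltedStablePDF x)
  refine h_prod.congr (ae_of_all _ fun y ↦ ?_)
  simp only [betaTiltedStableIntegrand_eq, h_half]
  ring

lemma lintegral_lintegral_betaTiltedStableIntegrand (hα : 0 < α) (hr : -(1 / 2) < r) :
    ∫⁻ x in Ioi 0, ∫⁻ y in Ioo 0 1, ENNReal.ofReal (betaTiltedStableIntegrand α r x y) =
      ∫⁻ v in Ioo 0 1,
        ENNReal.ofReal (Real.exp α * (invSqExponentialPDF α v * (1 - v) ^ r)) := by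
  have hB : 0 < beta (1 / 2) (r + 1 / 2) := beta_pos (by norm_num) (by linarith)
  have h_laplace : ∀ y ∈ Ioo (0 : ℝ) 1,
      ∫⁻ x in Ioi 0, ENNReal.ofReal (betaTiltedStableIntegrand α r x y) =
        ∫⁻ v in Ioo 0 y, ENNReal.ofReal
            (Real.exp α / beta (1 / 2) (r + 1 / 2) * invSqExponentialPDF α v) *
          ENNReal.ofReal ((y - v) ^ (1 / 2 - 1 : ℝ) * (1 - y) ^ (r + 1 / 2 - 1)) := by
    intro y hy
    have h_const : 0 ≤ Real.exp α / beta (1 / 2) (r + 1 / 2) * (1 - y) ^ (r + 1 / 2 - 1) :=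
      mul_nonneg (by positivity) (Real.rpow_nonneg (sub_nonneg.2 hy.2.le) _)
    simp_rw [betaTiltedStableIntegrand_eq, ENNReal.ofReal_mul h_const]
    rw [lintegral_const_mul _ (by fun_prop), lintegral_exp_mul_tiltedStablePDF hα hy.1,
      ← lintegral_const_mul _ (by fun_prop)]
    refine setLIntegral_congr_fun measurableSet_Ioo fun v hv ↦ ?_
    have h_pdf := invSqExponentialPDF_nonneg hα.le hv.1.le
    have h_half : (1 / 2 - 1 : ℝ) = -(1 / 2) := by norm_num
    simp only [← ENNReal.ofReal_mul h_const]
    rw [← ENNReal.ofReal_mul (by positivity), h_half]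
    ring_nf
  rw [lintegral_lintegral_swap
      (measurable_betaTiltedStableIntegrand α r).ennreal_ofReal.aemeasurable,
    setLIntegral_congr_fun measurableSet_Ioo h_laplace,
    lintegral_lintegral_mul_beta (by norm_num) (by linarith) (by fun_prop)]
  refine setLIntegral_congr_fun measurableSet_Ioo fun v hv ↦ ?_
  have h_pdf := invSqExponentialPDF_nonneg hα.le hv.1.le
  have h_exponent : 1 / 2 + (r + 1 / 2) - 1 = r := by ring
  rw [← ENNReal.ofReal_mul (by positivity), h_exponent, mul_mul_mul_comm,
    div_mul_cancel₀ _ hB.ne']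

end MonteCarlo

theorem stmt16_general {α : ℝ} (hα : 0 < α) {r : ℝ} (hr : -(1 / 2) < r) :
    α * 2 ^ r *
        ∫ x in Set.Ioi (0 : ℝ),
          x ^ r * (1 + 2 * x) ^ (-(r + 1 / 2)) *
            Real.exp (-α * (Real.sqrt (1 + 2 * x) - 1))
      = ∫ x in Set.Ioi (0 : ℝ), ∫ y in Set.Ioo (0 : ℝ) 1,
          Real.exp (-(x / y) * α ^ 2 + α) *
            (Real.Gamma (r + 1) / (Real.Gamma (1 / 2) * Real.Gamma (r + 1 / 2))) *
              y ^ (-(1 / 2) : ℝ) * (1 - y) ^ (r - 1 / 2) *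
            ((1 / 4) * x ^ (-(2 : ℝ)) * Real.exp (-1 / (4 * x))) := by
  change _ = ∫ x in Ioi 0, ∫ y in Ioo 0 1, betaTiltedStableIntegrand α r x y
  rw [integral_integral_eq_toReal_lintegral_lintegral (measurable_betaTiltedStableIntegrand α r)
      (ae_restrict_of_forall_mem measurableSet_Ioi fun x hx ↦
        ae_restrict_of_forall_mem measurableSet_Ioo fun y hy ↦
          betaTiltedStableIntegrand_nonneg hr (le_of_lt hx) hy)
      (ae_restrict_of_forall_mem measurableSet_Ioi fun x hx ↦
        integrableOn_betaTiltedStableIntegrand α hr (le_of_lt hx)),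
    lintegral_lintegral_betaTiltedStableIntegrand hα hr, ← lintegral_rpow_mul_exp_sqrt,
    ← integral_const_mul]
  refine integral_eq_lintegral_of_nonneg_ae
    (ae_restrict_of_forall_mem measurableSet_Ioi fun x (hx : 0 < x) ↦ ?_)
    (Measurable.aestronglyMeasurable (by fun_prop))
  simp only [Pi.zero_apply]
  positivity

/-- Monte Carlo representation of `p_{f_v}(m; m, α, 1/2)`:
`α 2^m ∫_0^∞ x^m (1+2x)^{−(m+1/2)} e^{−α(√(1+2x)−1)} dx` equals the double
integral of `exp(−(x/y)α² + α)` against the Beta(1/2, m+1/2) density in `y` and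
the polynomially tilted `1/2`-stable density `(1/4) x^{−2} e^{−1/(4x)}` in `x`. -/
theorem stmt16 (α : ℝ) (hα : 0 < α) (m : ℕ) (hm : 1 ≤ m) :
    α * 2 ^ m *
        ∫ x in Set.Ioi (0 : ℝ),
          x ^ m * (1 + 2 * x) ^ (-((m : ℝ) + 1 / 2)) *
            Real.exp (-α * (Real.sqrt (1 + 2 * x) - 1))
      = ∫ x in Set.Ioi (0 : ℝ), ∫ y in Set.Ioo (0 : ℝ) 1,
          Real.exp (-(x / y) * α ^ 2 + α) *
            (Real.Gamma ((m : ℝ) + 1) / (Real.Gamma (1 / 2) * Real.Gamma ((m : ℝ) + 1 / 2))) *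
              y ^ (-(1 / 2) : ℝ) * (1 - y) ^ ((m : ℝ) - 1 / 2) *
            ((1 / 4) * x ^ (-(2 : ℝ)) * Real.exp (-1 / (4 * x))) := by
  simpa only [Real.rpow_natCast] using
    stmt16_general hα (r := m) (by linarith [m.cast_nonneg (α := ℝ)])
end
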